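/- Under the adapted pure-frontal setup with focal data, assume κ_t(0) ≠ 0 and that 0 is a first order V_j-ridge point of f, i.e. (V_jκ_j)(0) = 0 and (V_jV_jκ_j)(0) ≠ 0 (so 0 is a non-degenerate singular point of the first kind of the focal surface C_j, and (ρ_j)_v(0) = 0). Then C_j has a cuspidal cross cap at 0 (its germ at 0 is A-equivalent to (u,v) ↦ (u,v²,uv³) at 0, where A-equivalence of map germs means composing with diffeomorphism germs of source and target) if and only if, with all invariants and their u-derivatives evaluated at u = 0 and indices taken mod 2: r_c'(0) ≠ 0 and (ρ_j)_u(0)·(κ_t²·κ_ν' + 2κ_t·κ_t'·(κ_j−κ_ν) + (r_b'/3)·(κ_j−κ_ν)²) ≠ (κ_t² + (κ_j−κ_ν)²)·(κ_{j+1}−κ_j)·(κ_ν−κ_j). (Here (ρ_j)_u(0) equals the derivative ρ̂_j'(0) of ρ_j along the singular curve of C_j, since (ρ_j)_v(0) = 0.) -/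

import Mathlib

open Filter

noncomputable section

/-- Vectors in ℝ³, modeled as `Fin 3 → ℝ`. -/
abbrev R3 : Type := Fin 3 → ℝ

/-- The Euclidean inner product on ℝ³. -/
def dot3 (a b : R3) : ℝ := a 0 * b 0 + a 1 * b 1 + a 2 * b 2

/-- The Euclidean norm on ℝ³. -/
def norm3 (a : R3) : ℝ := Real.sqrt (dot3 a a)

/-- Partial derivative in the `u`-direction. -/
def pu {E : Type*} [NormedAddCommGroup E] [NormedSpace ℝ E] (F : ℝ × ℝ → E) (p : ℝ × ℝ) : E :=
  fderiv ℝ F p (1, 0)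

/-- Partial derivative in the `v`-direction. -/
def pv {E : Type*} [NormedAddCommGroup E] [NormedSpace ℝ E] (F : ℝ × ℝ → E) (p : ℝ × ℝ) : E :=
  fderiv ℝ F p (0, 1)

/-- The adapted pure-frontal setup: `f` is a frontal with unit normal `ν`,
`f_v = v·h`, `ν_v = v·ν₁`, the frame `{f_u, h, ν}` is linearly independent everywhere
and orthonormal along the `u`-axis. -/
structure AdaptedPureFrontal (f ν h ν₁ : ℝ × ℝ → R3) : Prop where
  smooth_f : ContDiff ℝ (⊤ : ℕ∞) f
  smooth_ν : ContDiff ℝ (⊤ : ℕ∞) ν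
  smooth_h : ContDiff ℝ (⊤ : ℕ∞) h
  smooth_ν₁ : ContDiff ℝ (⊤ : ℕ∞) ν₁
  unit_ν : ∀ p, dot3 (ν p) (ν p) = 1
  orth_fu_ν : ∀ p, dot3 (pu f p) (ν p) = 0
  orth_fv_ν : ∀ p, dot3 (pv f p) (ν p) = 0
  fv_eq : ∀ p : ℝ × ℝ, pv f p = p.2 • h p
  νv_eq : ∀ p : ℝ × ℝ, pv ν p = p.2 • ν₁ p
  indep : ∀ p, LinearIndependent ℝ ![pu f p, h p, ν p]
  adapted_fu : ∀ u : ℝ, dot3 (pu f (u, 0)) (pu f (u, 0)) = 1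
  adapted_h : ∀ u : ℝ, dot3 (h (u, 0)) (h (u, 0)) = 1
  adapted_fu_h : ∀ u : ℝ, dot3 (pu f (u, 0)) (h (u, 0)) = 0
  adapted_h_ν : ∀ u : ℝ, dot3 (h (u, 0)) (ν (u, 0)) = 0

/-- Ẽ = ⟨f_u, f_u⟩. -/
def Et (f : ℝ × ℝ → R3) (p : ℝ × ℝ) : ℝ := dot3 (pu f p) (pu f p)

/-- F̃ = ⟨f_u, h⟩. -/
def Ft (f h : ℝ × ℝ → R3) (p : ℝ × ℝ) : ℝ := dot3 (pu f p) (h p)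

/-- G̃ = ⟨h, h⟩. -/
def Gt (h : ℝ × ℝ → R3) (p : ℝ × ℝ) : ℝ := dot3 (h p) (h p)

/-- L̃ = −⟨f_u, ν_u⟩. -/
def Lt (f ν : ℝ × ℝ → R3) (p : ℝ × ℝ) : ℝ := -dot3 (pu f p) (pu ν p)

/-- M̃ = −⟨h, ν_u⟩. -/
def Mt (h ν : ℝ × ℝ → R3) (p : ℝ × ℝ) : ℝ := -dot3 (h p) (pu ν p)

/-- Ñ₁ = −⟨h, ν₁⟩. -/
def Nt1 (h ν₁ : ℝ × ℝ → R3) (p : ℝ × ℝ) : ℝ := -dot3 (h p) (ν₁ p)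

/-- The Gaussian curvature K = (L̃Ñ₁ − M̃²)/(ẼG̃ − F̃²). -/
def Kg (f ν h ν₁ : ℝ × ℝ → R3) (p : ℝ × ℝ) : ℝ :=
  (Lt f ν p * Nt1 h ν₁ p - Mt h ν p ^ 2) / (Et f p * Gt h p - Ft f h p ^ 2)

/-- The mean curvature H = (ẼÑ₁ − 2F̃M̃ + G̃L̃)/(2(ẼG̃ − F̃²)). -/
def Hm (f ν h ν₁ : ℝ × ℝ → R3) (p : ℝ × ℝ) : ℝ :=
  (Et f p * Nt1 h ν₁ p - 2 * Ft f h p * Mt h ν p + Gt h p * Lt f ν p) /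
    (2 * (Et f p * Gt h p - Ft f h p ^ 2))

/-- The principal curvature κ = H + ε√(H² − K); `ε = 1` gives κ₁ and `ε = -1` gives κ₂. -/
def kap (f ν h ν₁ : ℝ × ℝ → R3) (ε : ℝ) (p : ℝ × ℝ) : ℝ :=
  Hm f ν h ν₁ p + ε * Real.sqrt (Hm f ν h ν₁ p ^ 2 - Kg f ν h ν₁ p)

/-- First component of the principal vector field V = −v(M̃ − κF̃)∂_u + (L̃ − κẼ)∂_v. -/
def V1c (f ν h ν₁ : ℝ × ℝ → R3) (ε : ℝ) (p : ℝ × ℝ) : ℝ :=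
  -(p.2 * (Mt h ν p - kap f ν h ν₁ ε p * Ft f h p))

/-- Second component of the principal vector field V = −v(M̃ − κF̃)∂_u + (L̃ − κẼ)∂_v. -/
def V2c (f ν h ν₁ : ℝ × ℝ → R3) (ε : ℝ) (p : ℝ × ℝ) : ℝ :=
  Lt f ν p - kap f ν h ν₁ ε p * Et f p

/-- Directional derivative of `g` along the principal vector field V. -/
def VD (f ν h ν₁ : ℝ × ℝ → R3) (ε : ℝ) {E : Type*} [NormedAddCommGroup E] [NormedSpace ℝ E]
    (g : ℝ × ℝ → E) (p : ℝ × ℝ) : E :=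
  V1c f ν h ν₁ ε p • pu g p + V2c f ν h ν₁ ε p • pv g p

/-- The radius of principal curvature ρ = 1/κ. -/
def rho (f ν h ν₁ : ℝ × ℝ → R3) (ε : ℝ) (p : ℝ × ℝ) : ℝ := (kap f ν h ν₁ ε p)⁻¹

/-- The focal surface C = f + ρ·ν. -/
def Cf (f ν h ν₁ : ℝ × ℝ → R3) (ε : ℝ) (p : ℝ × ℝ) : R3 :=
  f p + rho f ν h ν₁ ε p • ν p

/-- The normal direction x = −(M̃ − κF̃)·f_u + (L̃ − κẼ)·h of the focal surface. -/
def xj (f ν h ν₁ : ℝ × ℝ → R3) (ε : ℝ) (p : ℝ × ℝ) : R3 :=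
  (-(Mt h ν p - kap f ν h ν₁ ε p * Ft f h p)) • pu f p +
    (Lt f ν p - kap f ν h ν₁ ε p * Et f p) • h p

/-- The unit normal e = x/‖x‖ of the focal surface. -/
def ej (f ν h ν₁ : ℝ × ℝ → R3) (ε : ℝ) (p : ℝ × ℝ) : R3 :=
  (norm3 (xj f ν h ν₁ ε p))⁻¹ • xj f ν h ν₁ ε p

/-- The limiting normal curvature κ_ν(u) = L̃(u,0). -/
def kν (f ν : ℝ × ℝ → R3) (u : ℝ) : ℝ := Lt f ν (u, 0)

/-- The cuspidal torsion κ_t(u) = M̃(u,0). -/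
def kt (h ν : ℝ × ℝ → R3) (u : ℝ) : ℝ := Mt h ν (u, 0)

/-- The bias r_b(u) = 3Ñ₁(u,0). -/
def rb (h ν₁ : ℝ × ℝ → R3) (u : ℝ) : ℝ := 3 * Nt1 h ν₁ (u, 0)

/-- The secondary cuspidal curvature r_c(u) = 24((Ñ₁)_v − 2F̃_vM̃ − G̃_vÑ₁)(u,0). -/
def rc (f ν h ν₁ : ℝ × ℝ → R3) (u : ℝ) : ℝ :=
  24 * (pv (Nt1 h ν₁) (u, 0) - 2 * pv (Ft f h) (u, 0) * Mt h ν (u, 0) -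
    pv (Gt h) (u, 0) * Nt1 h ν₁ (u, 0))

/-- The singular curvature κ_s(u) = ⟨f_uu, h⟩(u,0). -/
def ks (f h : ℝ × ℝ → R3) (u : ℝ) : ℝ := dot3 (pu (pu f) (u, 0)) (h (u, 0))

/-- The rank of the differential of `F` at `p`. -/
def rankAt (F : ℝ × ℝ → R3) (p : ℝ × ℝ) : ℕ :=
  Module.finrank ℝ (LinearMap.range (fderiv ℝ F p).toLinearMap)

/-- A map `φ` is a local diffeomorphism at `p` if it is C^∞ at `p` and admits a
local C^∞ inverse near `p`. -/
def IsLocalDiffeoAt {E F : Type*} [NormedAddCommGroup E] [NormedSpace ℝ E]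
    [NormedAddCommGroup F] [NormedSpace ℝ F] (φ : E → F) (p : E) : Prop :=
  ContDiffAt ℝ (⊤ : ℕ∞) φ p ∧ ∃ ψ : F → E, ContDiffAt ℝ (⊤ : ℕ∞) ψ (φ p) ∧
    (∀ᶠ x in nhds p, ψ (φ x) = x) ∧ (∀ᶠ y in nhds (φ p), φ (ψ y) = y)

/-- 𝒜-equivalence of map germs: the germ of `f` at `p` is 𝒜-equivalent to the germ of
`g` at `q` if `f` is carried to `g` by composing with diffeomorphism germs of the
source and the target. -/
def AEquivAt (f : ℝ × ℝ → R3) (p : ℝ × ℝ) (g : ℝ × ℝ → R3) (q : ℝ × ℝ) : Prop :=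
  ∃ (φ : ℝ × ℝ → ℝ × ℝ) (Φ : R3 → R3),
    IsLocalDiffeoAt φ q ∧ φ q = p ∧ IsLocalDiffeoAt Φ (f p) ∧
    ∀ᶠ x in nhds q, Φ (f (φ x)) = g x



theorem smooth_class {E : Type*} [NormedAddCommGroup E] [NormedSpace ℝ E]
    (S : (ℝ × ℝ → E) → Prop)
    (hS : ∀ g, S g → ∃ a b, S a ∧ S b ∧ ∀ p, HasFDerivAt g
      ((ContinuousLinearMap.fst ℝ ℝ ℝ).smulRight (a p) +
        (ContinuousLinearMap.snd ℝ ℝ ℝ).smulRight (b p)) p) :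
    ∀ g, S g → ContDiff ℝ (⊤ : ℕ∞) g := by
  have key : ∀ n : ℕ, ∀ g, S g → ContDiff ℝ n g := by
    intro n
    induction n with
    | zero =>
      intro g hg
      obtain ⟨a, b, ha, hb, hd⟩ := hS g hg
      simp only [Nat.cast_zero, contDiff_zero]
      exact continuous_iff_continuousAt.2 fun p => (hd p).continuousAt
    | succ n ih =>
      intro g hg
      obtain ⟨a, b, ha, hb, hd⟩ := hS g hg
      push_cast
      rw [contDiff_succ_iff_hasFDerivAt]
      exact ⟨_, (contDiff_const.smulRight (ih a ha)).add (contDiff_const.smulRight (ih b hb)), hd⟩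
  intro g hg
  exact contDiff_infty.2 fun n => key n g hg

theorem hasFDerivAt_pupv {E : Type*} [NormedAddCommGroup E] [NormedSpace ℝ E]
    {F : ℝ × ℝ → E} {p : ℝ × ℝ} (hF : DifferentiableAt ℝ F p) :
    HasFDerivAt F ((ContinuousLinearMap.fst ℝ ℝ ℝ).smulRight (pu F p) +
        (ContinuousLinearMap.snd ℝ ℝ ℝ).smulRight (pv F p)) p := by
  convert! hF.hasFDerivAt using 1
  ext <;> simp [pu, pv]

theorem smooth_pu {E : Type*} [NormedAddCommGroup E] [NormedSpace ℝ E]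
    {F : ℝ × ℝ → E} (hF : ContDiff ℝ (⊤ : ℕ∞) F) : ContDiff ℝ (⊤ : ℕ∞) (pu F) := by
  have := (contDiff_infty_iff_fderiv.1 hF).2
  exact this.clm_apply contDiff_const

theorem smooth_pv {E : Type*} [NormedAddCommGroup E] [NormedSpace ℝ E]
    {F : ℝ × ℝ → E} (hF : ContDiff ℝ (⊤ : ℕ∞) F) : ContDiff ℝ (⊤ : ℕ∞) (pv F) := by
  have := (contDiff_infty_iff_fderiv.1 hF).2
  exact this.clm_apply contDiff_const

def hadI (F : ℝ × ℝ → ℝ) (k : ℕ) (p : ℝ × ℝ) : ℝ := ∫ s in (0:ℝ)..1, s ^ k * F (p.1, s * p.2)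

theorem hadI_deriv (F : ℝ × ℝ → ℝ) (hF : ContDiff ℝ (⊤ : ℕ∞) F) (k : ℕ) (p : ℝ × ℝ) :
    HasFDerivAt (hadI F k) ((ContinuousLinearMap.fst ℝ ℝ ℝ).smulRight (hadI (pu F) k p) +
        (ContinuousLinearMap.snd ℝ ℝ ℝ).smulRight (hadI (pv F) (k+1) p)) p := by
  have cF := hF.continuous
  have cu := (smooth_pu hF).continuous
  have cv := (smooth_pv hF).continuous
  let F' : ℝ × ℝ → ℝ → (ℝ × ℝ →L[ℝ] ℝ) := fun q s =>
    (ContinuousLinearMap.fst ℝ ℝ ℝ).smulRight (s ^ k * pu F (q.1, s * q.2)) +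
        (ContinuousLinearMap.snd ℝ ℝ ℝ).smulRight (s ^ (k+1) * pv F (q.1, s * q.2))
  have cF' : Continuous (fun x : (ℝ × ℝ) × ℝ => F' x.1 x.2) := by
    refine Continuous.add ?_ ?_
    · exact ((ContinuousLinearMap.smulRightL ℝ (ℝ × ℝ) ℝ (ContinuousLinearMap.fst ℝ ℝ ℝ)).continuous).comp
        (by fun_prop : Continuous fun x : (ℝ × ℝ) × ℝ => x.2 ^ k * pu F (x.1.1, x.2 * x.1.2))
    · exact ((ContinuousLinearMap.smulRightL ℝ (ℝ × ℝ) ℝ (ContinuousLinearMap.snd ℝ ℝ ℝ)).continuous).comp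
        (by fun_prop : Continuous fun x : (ℝ × ℝ) × ℝ => x.2 ^ (k+1) * pv F (x.1.1, x.2 * x.1.2))
  obtain ⟨M, hM⟩ := ((isCompact_closedBall p 1).prod (isCompact_Icc (a := (0:ℝ)) (b := 1))).exists_bound_of_continuousOn
    cF'.continuousOn
  have main := intervalIntegral.hasFDerivAt_integral_of_dominated_of_fderiv_le (μ := MeasureTheory.volume)
    (a := 0) (b := 1) (F := fun q s => s ^ k * F (q.1, s * q.2)) (F' := F') (x₀ := p)
    (s := Metric.closedBall p 1) (bound := fun _ => M) (Metric.closedBall_mem_nhds p one_pos)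
    (Eventually.of_forall fun q => (by fun_prop : Continuous fun s : ℝ => s ^ k * F (q.1, s * q.2)).aestronglyMeasurable)
    ((by fun_prop : Continuous fun s : ℝ => s ^ k * F (p.1, s * p.2)).intervalIntegrable _ _)
    ((by exact cF'.comp (by fun_prop : Continuous fun s : ℝ => ((p, s) : (ℝ × ℝ) × ℝ)) : Continuous (F' p)).aestronglyMeasurable)
    (by
      refine Eventually.of_forall fun t ht q hq => hM (q, t) ⟨hq, ?_⟩
      rw [Set.uIoc_of_le zero_le_one] at ht
      exact ⟨ht.1.le, ht.2⟩)
    (by simp)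
    (by
      refine Eventually.of_forall fun t ht q hq => ?_
      have h1 : HasFDerivAt (fun q : ℝ × ℝ => (q.1, t * q.2))
          ((ContinuousLinearMap.fst ℝ ℝ ℝ).prod (t • ContinuousLinearMap.snd ℝ ℝ ℝ)) q :=
        (hasFDerivAt_fst).prodMk (hasFDerivAt_snd.const_mul t)
      have h2 := ((hasFDerivAt_pupv (hF.differentiable (by simp) (q.1, t * q.2))).comp q h1).const_mul (t ^ k)
      convert! h2 using 1
      ext <;> simp [F'] ; ring)
  convert! main using 1
  have e1 : hadI (pu F) k p = ∫ s in (0:ℝ)..1, s ^ k * pu F (p.1, s * p.2) := rfl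
  have e2 : hadI (pv F) (k+1) p = ∫ s in (0:ℝ)..1, s ^ (k+1) * pv F (p.1, s * p.2) := rfl
  have i1 : Continuous fun s : ℝ => s ^ k * pu F (p.1, s * p.2) := by fun_prop
  have i2 : Continuous fun s : ℝ => s ^ (k+1) * pv F (p.1, s * p.2) := by fun_prop
  have l1 := (ContinuousLinearMap.smulRightL ℝ (ℝ × ℝ) ℝ (ContinuousLinearMap.fst ℝ ℝ ℝ)).intervalIntegral_comp_comm (i1.intervalIntegrable (μ := MeasureTheory.volume) 0 1)
  have l2 := (ContinuousLinearMap.smulRightL ℝ (ℝ × ℝ) ℝ (ContinuousLinearMap.snd ℝ ℝ ℝ)).intervalIntegral_comp_comm (i2.intervalIntegrable (μ := MeasureTheory.volume) 0 1)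
  rw [e1, e2]
  change (ContinuousLinearMap.smulRightL ℝ (ℝ × ℝ) ℝ (ContinuousLinearMap.fst ℝ ℝ ℝ)) _ +
    (ContinuousLinearMap.smulRightL ℝ (ℝ × ℝ) ℝ (ContinuousLinearMap.snd ℝ ℝ ℝ)) _ = _
  rw [← l1, ← l2, ← intervalIntegral.integral_add]
  · rfl
  · exact (((ContinuousLinearMap.smulRightL ℝ (ℝ × ℝ) ℝ (ContinuousLinearMap.fst ℝ ℝ ℝ)).continuous).comp i1).intervalIntegrable _ _
  · exact (((ContinuousLinearMap.smulRightL ℝ (ℝ × ℝ) ℝ (ContinuousLinearMap.snd ℝ ℝ ℝ)).continuous).comp i2).intervalIntegrable _ _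

theorem hadI_smooth (F : ℝ × ℝ → ℝ) (hF : ContDiff ℝ (⊤ : ℕ∞) F) (k : ℕ) :
    ContDiff ℝ (⊤ : ℕ∞) (hadI F k) := by
  refine smooth_class (fun g => ∃ F k, ContDiff ℝ (⊤ : ℕ∞) F ∧ g = hadI F k) ?_ _ ⟨F, k, hF, rfl⟩
  rintro g ⟨F, k, hF, rfl⟩
  exact ⟨_, _, ⟨_, _, smooth_pu hF, rfl⟩, ⟨_, _, smooth_pv hF, rfl⟩, hadI_deriv F hF k⟩

theorem hadamard1 (F : ℝ × ℝ → ℝ) (hF : ContDiff ℝ (⊤ : ℕ∞) F) :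
    ∃ G : ℝ × ℝ → ℝ, ContDiff ℝ (⊤ : ℕ∞) G ∧ (∀ u v, F (u, v) = F (u, 0) + v * G (u, v)) ∧
      ∀ u, G (u, 0) = pv F (u, 0) := by
  refine ⟨hadI (pv F) 0, hadI_smooth _ (smooth_pv hF) 0, fun u v => ?_, fun u => ?_⟩
  · have hd : ∀ s ∈ Set.uIcc (0:ℝ) 1, HasDerivAt (fun s : ℝ => F (u, s * v)) (v * pv F (u, s * v)) s := by
      intro s _
      have h1 : HasDerivAt (fun s : ℝ => (u, s * v)) ((0 : ℝ), v) s :=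
        (hasDerivAt_const s u).prodMk (by simpa using (hasDerivAt_id s).mul_const v)
      have h2 := (hasFDerivAt_pupv (hF.differentiable (by simp) (u, s * v))).comp_hasDerivAt s h1
      convert! h2 using 1
      simp
    have cv := (smooth_pv hF).continuous
    have := intervalIntegral.integral_eq_sub_of_hasDerivAt hd
      ((by fun_prop : Continuous fun s : ℝ => v * pv F (u, s * v)).intervalIntegrable _ _)
    rw [intervalIntegral.integral_const_mul] at this
    simp only [hadI, pow_zero, one_mul]
    rw [this]; simp
  · simp [hadI]

theorem hadamard2 (F : ℝ × ℝ → ℝ) (hF : ContDiff ℝ (⊤ : ℕ∞) F) :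
    ∃ G : ℝ × ℝ → ℝ, ContDiff ℝ (⊤ : ℕ∞) G ∧
      (∀ u v, F (u, v) = F (u, 0) + v * pv F (u, 0) + v ^ 2 * G (u, v)) := by
  obtain ⟨G, hG, h1, h2⟩ := hadamard1 F hF
  obtain ⟨G', hG', h3, -⟩ := hadamard1 G hG
  refine ⟨G', hG', fun u v => ?_⟩
  rw [h1, h3, h2]; ring

/-- smooth in a neighbourhood -/
def SN {E F : Type*} [NormedAddCommGroup E] [NormedSpace ℝ E]
    [NormedAddCommGroup F] [NormedSpace ℝ F] (f : E → F) (p : E) : Prop :=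
  ∀ᶠ q in nhds p, ContDiffAt ℝ (⊤ : ℕ∞) f q

theorem cutoff {E F : Type*} [NormedAddCommGroup E] [NormedSpace ℝ E] [FiniteDimensional ℝ E]
    [NormedAddCommGroup F] [NormedSpace ℝ F] (f : E → F) (p : E) (hf : SN f p) :
    ∃ g : E → F, ContDiff ℝ (⊤ : ℕ∞) g ∧ HasCompactSupport g ∧ g =ᶠ[nhds p] f := by
  obtain ⟨c, hc⟩ : ∃ c : ContDiffBump (toEuclidean p), Euclidean.closedBall p c.rOut ⊆
      {q | ContDiffAt ℝ (⊤ : ℕ∞) f q} := by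
    obtain ⟨d, d_pos, hd⟩ := Euclidean.nhds_basis_closedBall.mem_iff.1 hf
    exact ⟨⟨d / 2, d, half_pos d_pos, half_lt_self d_pos⟩, hd⟩
  set χ : E → ℝ := c ∘ toEuclidean with hχ
  have hχs : ContDiff ℝ (⊤ : ℕ∞) χ := c.contDiff.comp (ContinuousLinearEquiv.contDiff _)
  have hsupp : ∀ q, q ∉ Euclidean.closedBall p c.rOut → χ =ᶠ[nhds q] 0 := by
    intro q hq
    have ho : IsOpen (Euclidean.closedBall p c.rOut)ᶜ := Euclidean.isClosed_closedBall.isOpen_compl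
    filter_upwards [ho.mem_nhds hq] with z hz
    apply c.zero_of_le_dist
    by_contra hh
    exact hz (le_of_lt (not_le.1 hh))
  refine ⟨fun q => χ q • f q, ?_, ?_, ?_⟩
  · rw [contDiff_iff_contDiffAt]
    intro q
    by_cases hq : q ∈ Euclidean.closedBall p c.rOut
    · exact hχs.contDiffAt.smul (hc hq)
    · refine (contDiffAt_const (c := (0 : F))).congr_of_eventuallyEq ?_
      filter_upwards [hsupp q hq] with z hz
      simp [hz]
  · apply HasCompactSupport.intro (Euclidean.isCompact_closedBall (x := p) (r := c.rOut))
    intro q hq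
    simp [(hsupp q hq).self_of_nhds]
  · have h1 : (c : _ → ℝ) =ᶠ[nhds (toEuclidean p)] 1 := c.eventuallyEq_one
    have h2 := (toEuclidean (E := E)).continuous.continuousAt (x := p) h1
    filter_upwards [h2] with q hq
    have : χ q = 1 := hq
    simp [this]


theorem exists_c0 : ∃ c : ℝ → ℝ, ContDiff ℝ (⊤ : ℕ∞) c ∧ ∀ v, c (v ^ 2) = Real.cos v := by
  let a : ℕ → ℝ := fun n => (-1) ^ n / ((2 * n).factorial : ℝ)
  have ha : ∀ n, a n ≠ 0 := fun n => by
    simp only [a]; positivity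
  have hr : (FormalMultilinearSeries.ofScalars ℝ a).radius = ⊤ := by
    apply FormalMultilinearSeries.ofScalars_radius_eq_top_of_tendsto
    · exact Eventually.of_forall ha
    · have : ∀ n : ℕ, ‖a n.succ‖ / ‖a n‖ ≤ 1 / ((n : ℝ) + 1) := by
        intro n
        simp only [a, norm_div, norm_pow, norm_neg, norm_one, one_pow, RCLike.norm_natCast]
        have e : ((2 * n.succ).factorial : ℝ) = (2 * n + 2) * ((2 * n + 1) * (2 * n).factorial) := by
          rw [show 2 * n.succ = (2 * n + 1) + 1 by omega, Nat.factorial_succ, Nat.factorial_succ]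
          push_cast; ring
        rw [e]
        have : (0:ℝ) < (2 * n).factorial := by positivity
        rw [div_div_eq_mul_div, div_mul_eq_mul_div, div_div, div_le_div_iff₀ (by positivity) (by positivity)]
        have hn : (0:ℝ) ≤ n := by positivity
        nlinarith [mul_nonneg hn this.le, mul_nonneg (mul_nonneg hn hn) this.le]
      exact squeeze_zero (fun n => by positivity) this tendsto_one_div_add_atTop_nhds_zero_nat
  have hs := (FormalMultilinearSeries.ofScalars ℝ a).hasFPowerSeriesOnBall (by rw [hr]; simp)
  refine ⟨(FormalMultilinearSeries.ofScalars ℝ a).sum, ?_, fun v => ?_⟩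
  · have := hs.analyticOnNhd
    rw [hr] at this
    rw [← contDiffOn_univ]
    have h2 := this.contDiffOn (n := (⊤ : ℕ∞)) (by simp)
    simpa using h2
  · have h1 := Real.hasSum_cos v
    rw [← h1.tsum_eq]
    simp only [FormalMultilinearSeries.sum, FormalMultilinearSeries.ofScalars_apply_eq]
    congr 1
    ext n
    simp [a, ← pow_mul]; ring

theorem exists_c : ∃ c : ℝ → ℝ, ContDiff ℝ (⊤ : ℕ∞) c ∧ (∀ v, c (v ^ 2) = Real.cos v) ∧
    ∀ n, ∃ M, ∀ s, |iteratedDeriv n c s| ≤ M := by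
  obtain ⟨c, hc, hcos⟩ := exists_c0
  have hD : ∀ n, Differentiable ℝ (iteratedDeriv n c) := fun n =>
    hc.differentiable_iteratedDeriv n (by exact_mod_cast WithTop.coe_lt_top _)
  have hd : ∀ n s, HasDerivAt (iteratedDeriv n c) (iteratedDeriv (n+1) c s) s := by
    intro n s
    rw [iteratedDeriv_succ]
    exact (hD n s).hasDerivAt
  have hc1 : ∀ v, 2 * v * iteratedDeriv 1 c (v ^ 2) = - Real.sin v := by
    intro v
    have h1 : HasDerivAt (fun v : ℝ => iteratedDeriv 0 c (v ^ 2)) (iteratedDeriv 1 c (v^2) * (2 * v)) v := by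
      have := (hd 0 (v^2)).comp v (by simpa using hasDerivAt_pow 2 v : HasDerivAt (fun v : ℝ => v ^ 2) (2 * v) v)
      exact this
    simp only [iteratedDeriv_zero, hcos] at h1
    have := h1.unique (Real.hasDerivAt_cos v)
    linarith
  have hc2 : ∀ v, 2 * iteratedDeriv 1 c (v ^ 2) + 4 * v ^ 2 * iteratedDeriv 2 c (v^2) = - Real.cos v := by
    intro v
    have h1 : HasDerivAt (fun v : ℝ => 2 * v * iteratedDeriv 1 c (v ^ 2))
       (2 * iteratedDeriv 1 c (v^2) + 2 * v * (iteratedDeriv 2 c (v^2) * (2 * v))) v := by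
      have h0 := (hd 1 (v^2)).comp v (by simpa using hasDerivAt_pow 2 v : HasDerivAt (fun v : ℝ => v ^ 2) (2 * v) v)
      have := ((hasDerivAt_id v).const_mul 2).mul h0
      convert! this using 1
      simp
    simp only [hc1] at h1
    have := h1.unique (Real.hasDerivAt_sin v).neg
    linarith
  have ode : ∀ n : ℕ, ∀ s > 0, 4 * s * iteratedDeriv (n+2) c s + (4 * n + 2) * iteratedDeriv (n+1) c s
      + iteratedDeriv n c s = 0 := by
    intro n
    induction n with
    | zero =>
      intro s hs
      have := hc2 (√s)
      rw [← hcos, Real.sq_sqrt hs.le] at this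
      simp only [iteratedDeriv_zero, zero_add]
      push_cast
      linarith
    | succ n ih =>
      intro s hs
      have h1 : HasDerivAt (fun s => 4 * s * iteratedDeriv (n+2) c s + (4 * n + 2) * iteratedDeriv (n+1) c s
        + iteratedDeriv n c s) (4 * iteratedDeriv (n+2) c s + 4 * s * iteratedDeriv (n+3) c s +
          (4 * n + 2) * iteratedDeriv (n+2) c s + iteratedDeriv (n+1) c s) s := by
        have := ((((hasDerivAt_id s).const_mul 4).mul (hd (n+2) s)).add ((hd (n+1) s).const_mul (4 * (n:ℝ) + 2))).add (hd n s)
        convert! this using 1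
        simp
      have h2 : HasDerivAt (fun s => 4 * s * iteratedDeriv (n+2) c s + (4 * n + 2) * iteratedDeriv (n+1) c s
        + iteratedDeriv n c s) 0 s := by
        refine (hasDerivAt_const s (0:ℝ)).congr_of_eventuallyEq ?_
        filter_upwards [lt_mem_nhds hs] with t ht
        exact ih t ht
      have := h1.unique h2
      push_cast
      rw [show n + 1 + 2 = n + 3 by ring, show n + 1 + 1 = n + 2 by ring]
      linarith
  have comp : ∀ n a b, ∃ M, ∀ s ∈ Set.Icc (a:ℝ) b, |iteratedDeriv n c s| ≤ M := by
    intro n a b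
    exact isCompact_Icc.exists_bound_of_continuousOn (hD n).continuous.continuousOn
  have big : ∀ n, (∃ M, ∀ s, 1 ≤ s → |iteratedDeriv n c s| ≤ M) ∧ (∃ M, ∀ s, 1 ≤ s → |iteratedDeriv (n+1) c s| ≤ M) := by
    intro n
    induction n with
    | zero =>
      refine ⟨⟨1, fun s hs => ?_⟩, ⟨1, fun s hs => ?_⟩⟩
      · have := hcos (√s)
        rw [Real.sq_sqrt (by linarith)] at this
        rw [iteratedDeriv_zero, this]
        exact Real.abs_cos_le_one _
      · have := hc1 (√s)
        rw [Real.sq_sqrt (by linarith)] at this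
        have h1 : 1 ≤ √s := Real.one_le_sqrt.2 hs
        have h2 := Real.abs_sin_le_one (√s)
        rw [← abs_neg, ← this, abs_mul, abs_of_nonneg (by positivity)] at h2
        rw [zero_add]
        nlinarith [abs_nonneg (iteratedDeriv 1 c s)]
    | succ n ih =>
      refine ⟨ih.2, ?_⟩
      obtain ⟨⟨M1, h1⟩, ⟨M2, h2⟩⟩ := ih
      refine ⟨(4 * n + 2) * M2 + M1, fun s hs => ?_⟩
      have e := ode n s (by linarith)
      have e1 : 4 * s * iteratedDeriv (n+2) c s = -((4 * n + 2) * iteratedDeriv (n+1) c s + iteratedDeriv n c s) := by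
        linarith
      have e2 : 4 * s * |iteratedDeriv (n+2) c s| = |(4 * n + 2) * iteratedDeriv (n+1) c s + iteratedDeriv n c s| := by
        rw [← abs_neg ((4 * (n:ℝ) + 2) * _ + _), ← e1, abs_mul, abs_of_nonneg (by linarith : 0 ≤ 4 * s)]
      have e3 := abs_add_le ((4 * (n:ℝ) + 2) * iteratedDeriv (n+1) c s) (iteratedDeriv n c s)
      rw [abs_mul, abs_of_nonneg (by positivity : (0:ℝ) ≤ 4 * n + 2)] at e3
      have := mul_le_mul_of_nonneg_left (h2 s hs) (by positivity : (0:ℝ) ≤ 4 * n + 2)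
      have := h1 s hs
      change |iteratedDeriv (n+2) c s| ≤ _
      nlinarith [abs_nonneg (iteratedDeriv (n+2) c s)]
  have pos : ∀ n, ∃ M, ∀ s, 0 ≤ s → |iteratedDeriv n c s| ≤ M := by
    intro n
    obtain ⟨M1, h1⟩ := (big n).1
    obtain ⟨M2, h2⟩ := comp n 0 1
    refine ⟨max M1 M2, fun s hs => ?_⟩
    rcases le_total 1 s with h | h
    · exact (h1 s h).trans (le_max_left _ _)
    · exact (h2 s ⟨hs, h⟩).trans (le_max_right _ _)
  let d : ℝ → ℝ := fun s => Real.smoothTransition (s + 1) * c s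
  have hds : ContDiff ℝ (⊤ : ℕ∞) d :=
    (Real.smoothTransition.contDiff.comp (contDiff_id.add contDiff_const)).mul hc
  have hdp : ∀ s, 0 ≤ s → d s = c s := fun s hs => by
    simp only [d]; rw [Real.smoothTransition.one_of_one_le (by linarith), one_mul]
  refine ⟨d, hds, fun v => ?_, fun n => ?_⟩
  · rw [hdp _ (sq_nonneg v), hcos]
  · obtain ⟨M1, h1⟩ := pos n
    obtain ⟨M2, h2⟩ := (isCompact_Icc (a := (-1:ℝ)) (b := 0)).exists_bound_of_continuousOn
      (hds.differentiable_iteratedDeriv n (by exact_mod_cast WithTop.coe_lt_top _)).continuous.continuousOn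
    refine ⟨max (max M1 M2) 0, fun s => ?_⟩
    rcases lt_or_ge 0 s with h | h
    · have : d =ᶠ[nhds s] c := by
        filter_upwards [lt_mem_nhds h] with t ht using hdp t ht.le
      rw [this.iteratedDeriv_eq]
      exact (h1 s h.le).trans ((le_max_left _ _).trans (le_max_left _ _))
    · rcases lt_or_ge s (-1) with h' | h'
      · have : d =ᶠ[nhds s] fun _ => 0 := by
          filter_upwards [gt_mem_nhds h'] with t ht
          simp only [d]
          rw [Real.smoothTransition.zero_of_nonpos (by linarith), zero_mul]
        rw [this.iteratedDeriv_eq]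
        simp
      · exact (h2 s ⟨h', h⟩).trans ((le_max_right _ _).trans (le_max_left _ _))


abbrev E2 := EuclideanSpace ℝ (Fin 2)

def Qd (F : E2 → ℂ) : Prop :=
  Continuous F ∧ ∀ k : ℕ, MeasureTheory.Integrable (fun w : E2 => ‖w‖ ^ k * ‖F w‖)

theorem Qd.mul {F : E2 → ℂ} (hF : Qd F) (m : E2 → ℂ) (hm : Continuous m) (A : ℝ) (j : ℕ)
    (hA : ∀ w, ‖m w‖ ≤ A * ‖w‖ ^ j) : Qd (fun w => F w * m w) := by
  refine ⟨hF.1.mul hm, fun k => ?_⟩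
  have hc := hF.1
  refine ((hF.2 (k + j)).const_mul A).mono'
    (by fun_prop : Continuous fun w : E2 => ‖w‖ ^ k * ‖F w * m w‖).aestronglyMeasurable
    (Eventually.of_forall fun w => ?_)
  rw [Real.norm_of_nonneg (by positivity)]
  simp only [norm_mul, pow_add]
  have := mul_le_mul_of_nonneg_left (hA w) (by positivity : 0 ≤ ‖w‖ ^ k * ‖F w‖)
  nlinarith

def wG (c : ℝ → ℝ) (F : E2 → ℂ) (n : ℕ) (p : ℝ × ℝ) : ℂ :=
  ∫ w : E2, F w * (Complex.exp ((2 * Real.pi * w 0 * p.1 : ℝ) * Complex.I) *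
    ((iteratedDeriv n c (p.2 * (2 * Real.pi * w 1) ^ 2) : ℝ) : ℂ))

theorem wG_deriv (c : ℝ → ℝ) (hc : ContDiff ℝ (⊤ : ℕ∞) c)
    (hb : ∀ n, ∃ M, ∀ s, |iteratedDeriv n c s| ≤ M) (F : E2 → ℂ) (hF : Qd F) (n : ℕ) (p : ℝ × ℝ) :
    HasFDerivAt (wG c F n)
      ((ContinuousLinearMap.fst ℝ ℝ ℝ).smulRight
        (wG c (fun w => F w * ((2 * Real.pi * w 0 : ℝ) * Complex.I)) n p) +
        (ContinuousLinearMap.snd ℝ ℝ ℝ).smulRight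
        (wG c (fun w => F w * (((2 * Real.pi * w 1) ^ 2 : ℝ) : ℂ)) (n+1) p)) p := by
  have cF := hF.1
  have hD : ∀ n, Differentiable ℝ (iteratedDeriv n c) := fun n =>
    hc.differentiable_iteratedDeriv n (by exact_mod_cast WithTop.coe_lt_top _)
  have hd : ∀ n s, HasDerivAt (iteratedDeriv n c) (iteratedDeriv (n+1) c s) s := by
    intro n s
    rw [iteratedDeriv_succ]
    exact (hD n s).hasDerivAt
  have cn := (hD n).continuous
  have cn1 := (hD (n+1)).continuous
  obtain ⟨M0, h0⟩ := hb n
  obtain ⟨M1, h1⟩ := hb (n+1)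
  have hM0 : 0 ≤ M0 := (abs_nonneg _).trans (h0 0)
  have hM1 : 0 ≤ M1 := (abs_nonneg _).trans (h1 0)
  let k0 : ℝ × ℝ → E2 → ℂ := fun q w => F w * ((2 * Real.pi * w 0 : ℝ) * Complex.I) *
    (Complex.exp ((2 * Real.pi * w 0 * q.1 : ℝ) * Complex.I) *
    ((iteratedDeriv n c (q.2 * (2 * Real.pi * w 1) ^ 2) : ℝ) : ℂ))
  let k1 : ℝ × ℝ → E2 → ℂ := fun q w => F w * (((2 * Real.pi * w 1) ^ 2 : ℝ) : ℂ) *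
    (Complex.exp ((2 * Real.pi * w 0 * q.1 : ℝ) * Complex.I) *
    ((iteratedDeriv (n+1) c (q.2 * (2 * Real.pi * w 1) ^ 2) : ℝ) : ℂ))
  have hexp : ∀ x : ℝ, ‖Complex.exp ((x : ℝ) * Complex.I)‖ = 1 := Complex.norm_exp_ofReal_mul_I
  have ck0 : ∀ q, Continuous (k0 q) := fun q => by
    simp only [k0]; fun_prop
  have ck1 : ∀ q, Continuous (k1 q) := fun q => by
    simp only [k1]; fun_prop
  have hQ0 : Qd (fun w => F w * ((2 * Real.pi * w 0 : ℝ) * Complex.I)) := by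
    refine hF.mul _ (by fun_prop) (2 * Real.pi) 1 fun w => ?_
    have := PiLp.norm_apply_le w 0
    simp only [norm_mul, Complex.norm_real, Complex.norm_I, mul_one, pow_one]
    rw [Real.norm_of_nonneg Real.pi_pos.le, Real.norm_of_nonneg (by norm_num : (0:ℝ) ≤ 2)]
    have hpi := Real.pi_pos
    gcongr
  have hQ1 : Qd (fun w => F w * (((2 * Real.pi * w 1) ^ 2 : ℝ) : ℂ)) := by
    refine hF.mul _ (by fun_prop) ((2 * Real.pi) ^ 2) 2 fun w => ?_
    have := PiLp.norm_apply_le w 1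
    rw [Complex.norm_real, norm_pow, norm_mul, mul_pow]
    rw [Real.norm_of_nonneg (by positivity : (0:ℝ) ≤ 2 * Real.pi)]
    gcongr
  have i0 : MeasureTheory.Integrable (fun w => ‖F w * ((2 * Real.pi * w 0 : ℝ) * Complex.I)‖) := by
    simpa using hQ0.2 0
  have i1 : MeasureTheory.Integrable (fun w => ‖F w * (((2 * Real.pi * w 1) ^ 2 : ℝ) : ℂ)‖) := by
    simpa using hQ1.2 0
  have iF : MeasureTheory.Integrable (fun w => ‖F w‖) := by simpa using hF.2 0
  have b0 : ∀ q w, ‖k0 q w‖ ≤ M0 * ‖F w * ((2 * Real.pi * w 0 : ℝ) * Complex.I)‖ := by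
    intro q w
    simp only [k0]
    rw [norm_mul, norm_mul (Complex.exp _), hexp, one_mul, Complex.norm_real, mul_comm]
    exact mul_le_mul_of_nonneg_right (h0 _) (norm_nonneg _)
  have b1 : ∀ q w, ‖k1 q w‖ ≤ M1 * ‖F w * (((2 * Real.pi * w 1) ^ 2 : ℝ) : ℂ)‖ := by
    intro q w
    simp only [k1]
    rw [norm_mul, norm_mul (Complex.exp _), hexp, one_mul, Complex.norm_real, mul_comm]
    exact mul_le_mul_of_nonneg_right (h1 _) (norm_nonneg _)
  have ik0 : MeasureTheory.Integrable (k0 p) :=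
    (i0.const_mul M0).mono' (ck0 p).aestronglyMeasurable (Eventually.of_forall (b0 p))
  have ik1 : MeasureTheory.Integrable (k1 p) :=
    (i1.const_mul M1).mono' (ck1 p).aestronglyMeasurable (Eventually.of_forall (b1 p))
  let L0 : ℂ →L[ℝ] (ℝ × ℝ →L[ℝ] ℂ) :=
    ContinuousLinearMap.smulRightL ℝ (ℝ × ℝ) ℂ (ContinuousLinearMap.fst ℝ ℝ ℝ)
  let L1 : ℂ →L[ℝ] (ℝ × ℝ →L[ℝ] ℂ) :=
    ContinuousLinearMap.smulRightL ℝ (ℝ × ℝ) ℂ (ContinuousLinearMap.snd ℝ ℝ ℝ)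
  let F' : ℝ × ℝ → E2 → (ℝ × ℝ →L[ℝ] ℂ) := fun q w => L0 (k0 q w) + L1 (k1 q w)
  have main := hasFDerivAt_integral_of_dominated_of_fderiv_le (μ := (MeasureTheory.volume : MeasureTheory.Measure E2))
    (𝕜 := ℝ)
    (F := fun (q : ℝ × ℝ) (w : E2) => F w * (Complex.exp ((2 * Real.pi * w 0 * q.1 : ℝ) * Complex.I) *
    ((iteratedDeriv n c (q.2 * (2 * Real.pi * w 1) ^ 2) : ℝ) : ℂ))) (F' := F') (x₀ := p)
    (s := Set.univ) (bound := fun w => ‖L0‖ * (M0 * ‖F w * ((2 * Real.pi * w 0 : ℝ) * Complex.I)‖)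
      + ‖L1‖ * (M1 * ‖F w * (((2 * Real.pi * w 1) ^ 2 : ℝ) : ℂ)‖)) univ_mem
    (Eventually.of_forall fun q => (by fun_prop : Continuous fun (w : E2) => F w * (Complex.exp ((2 * Real.pi * w 0 * q.1 : ℝ) * Complex.I) *
    ((iteratedDeriv n c (q.2 * (2 * Real.pi * w 1) ^ 2) : ℝ) : ℂ))).aestronglyMeasurable)
    ((iF.const_mul M0).mono' (by fun_prop : Continuous fun (w : E2) => F w * (Complex.exp ((2 * Real.pi * w 0 * p.1 : ℝ) * Complex.I) *
    ((iteratedDeriv n c (p.2 * (2 * Real.pi * w 1) ^ 2) : ℝ) : ℂ))).aestronglyMeasurable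
      (Eventually.of_forall fun w => by
        rw [norm_mul, norm_mul (Complex.exp _), hexp, one_mul, Complex.norm_real, mul_comm]
        exact mul_le_mul_of_nonneg_right (h0 _) (norm_nonneg _)))
    (((L0.continuous.comp (ck0 p)).add (L1.continuous.comp (ck1 p))).aestronglyMeasurable)
    (Eventually.of_forall fun w q _ => by
      refine (norm_add_le _ _).trans (add_le_add ?_ ?_)
      · exact (L0.le_opNorm _).trans (mul_le_mul_of_nonneg_left (b0 q w) (norm_nonneg _))
      · exact (L1.le_opNorm _).trans (mul_le_mul_of_nonneg_left (b1 q w) (norm_nonneg _)))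
    (((i0.const_mul M0).const_mul _).add ((i1.const_mul M1).const_mul _))
    (Eventually.of_forall fun w q _ => by
      have e1 : HasFDerivAt (fun q : ℝ × ℝ => ((2 * Real.pi * w 0 * q.1 : ℝ) : ℂ) * Complex.I)
          ((ContinuousLinearMap.fst ℝ ℝ ℝ).smulRight (((2 * Real.pi * w 0 : ℝ) : ℂ) * Complex.I)) q := by
        have := (Complex.ofRealCLM.hasFDerivAt.comp q
          ((hasFDerivAt_fst (𝕜 := ℝ) (p := q)).const_mul (2 * Real.pi * w 0))).mul_const Complex.I
        convert! this using 1
        ext <;> simp [mul_comm]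
      have e2 := e1.cexp
      have e3 : HasFDerivAt (fun q : ℝ × ℝ => ((iteratedDeriv n c (q.2 * (2 * Real.pi * w 1) ^ 2) : ℝ) : ℂ))
          ((ContinuousLinearMap.snd ℝ ℝ ℝ).smulRight (((iteratedDeriv (n+1) c (q.2 * (2 * Real.pi * w 1) ^ 2) *
            (2 * Real.pi * w 1) ^ 2 : ℝ)) : ℂ)) q := by
        have := Complex.ofRealCLM.hasFDerivAt.comp q ((hd n (q.2 * (2 * Real.pi * w 1) ^ 2)).comp_hasFDerivAt q
          ((hasFDerivAt_snd (𝕜 := ℝ) (p := q)).mul_const ((2 * Real.pi * w 1) ^ 2)))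
        convert! this using 1
        ext <;> simp
      have := (e2.mul e3).const_mul (F w)
      convert! this using 1
      ext
      · simp [F', L0, L1, k0, k1]; ring
      · simp [F', L0, L1, k0, k1]; ring)
  convert! main using 1
  change L0 (∫ w, k0 p w) + L1 (∫ w, k1 p w) = ∫ w, (L0 (k0 p w) + L1 (k1 p w))
  rw [MeasureTheory.integral_add (L0.integrable_comp ik0) (L1.integrable_comp ik1),
    L0.integral_comp_comm ik0, L1.integral_comp_comm ik1]

theorem wG_smooth (c : ℝ → ℝ) (hc : ContDiff ℝ (⊤ : ℕ∞) c)
    (hb : ∀ n, ∃ M, ∀ s, |iteratedDeriv n c s| ≤ M) (F : E2 → ℂ) (hF : Qd F) (n : ℕ) :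
    ContDiff ℝ (⊤ : ℕ∞) (wG c F n) := by
  refine smooth_class (fun g => ∃ F n, Qd F ∧ g = wG c F n) ?_ _ ⟨F, n, hF, rfl⟩
  rintro g ⟨F, n, hF, rfl⟩
  refine ⟨_, _, ⟨_, _, ?_, rfl⟩, ⟨_, _, ?_, rfl⟩, wG_deriv c hc hb F hF n⟩
  · refine hF.mul _ (by fun_prop) (2 * Real.pi) 1 fun w => ?_
    have := PiLp.norm_apply_le w 0
    simp only [norm_mul, Complex.norm_real, Complex.norm_I, mul_one, pow_one]
    rw [Real.norm_of_nonneg Real.pi_pos.le, Real.norm_of_nonneg (by norm_num : (0:ℝ) ≤ 2)]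
    have hpi := Real.pi_pos
    gcongr
  · refine hF.mul _ (by fun_prop) ((2 * Real.pi) ^ 2) 2 fun w => ?_
    have := PiLp.norm_apply_le w 1
    rw [Complex.norm_real, norm_pow, norm_mul, mul_pow]
    rw [Real.norm_of_nonneg (by positivity : (0:ℝ) ≤ 2 * Real.pi)]
    gcongr

theorem whitney_even (f : ℝ × ℝ → ℝ) (hf : ContDiff ℝ (⊤ : ℕ∞) f) :
    ∃ g : ℝ × ℝ → ℝ, ContDiff ℝ (⊤ : ℕ∞) g ∧
      ∀ᶠ p : ℝ × ℝ in nhds 0, f (p.1, p.2) + f (p.1, -p.2) = 2 * g (p.1, p.2 ^ 2) := by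
  obtain ⟨c, hc, hcos, hb⟩ := exists_c
  have hl : ContDiff ℝ (⊤ : ℕ∞) (fun w : E2 => ((f (w 0, w 1) : ℝ) : ℂ)) := by
    refine Complex.ofRealCLM.contDiff.comp (hf.comp ?_)
    fun_prop
  obtain ⟨φ, hφ, hφc, hφe⟩ := cutoff (fun w : E2 => ((f (w 0, w 1) : ℝ) : ℂ)) 0
    (Eventually.of_forall fun q => hl.contDiffAt)
  let Φ : SchwartzMap E2 ℂ := hφc.toSchwartzMap hφ
  let Ψ : SchwartzMap E2 ℂ := FourierTransform.fourier Φ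
  have hQ : Qd Ψ := ⟨Ψ.continuous, fun k => Ψ.integrable_pow_mul _ k⟩
  have inv : ∀ u v : ℝ, φ (!₂[u, v]) = ∫ w : E2, Ψ w * (Complex.exp ((2 * Real.pi * w 0 * u : ℝ) * Complex.I) *
      Complex.exp ((2 * Real.pi * w 1 * v : ℝ) * Complex.I)) := by
    intro u v
    have h1 : FourierTransformInv.fourierInv Ψ = Φ := FourierTransform.fourierInv_fourier_eq Φ
    have h2 : (FourierTransformInv.fourierInv Ψ) (!₂[u, v]) = φ (!₂[u, v]) := by rw [h1]; rfl
    rw [← h2, SchwartzMap.fourierInv_coe, Real.fourierInv_eq']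
    congr 1
    ext w
    rw [← Complex.exp_add, smul_eq_mul, mul_comm]
    congr 2
    simp [PiLp.inner_apply, Fin.sum_univ_two]
    ring
  have hint : ∀ u v : ℝ, MeasureTheory.Integrable (fun w : E2 => Ψ w * (Complex.exp ((2 * Real.pi * w 0 * u : ℝ) * Complex.I) *
      Complex.exp ((2 * Real.pi * w 1 * v : ℝ) * Complex.I))) := by
    intro u v
    have cΨ := hQ.1
    have iF : MeasureTheory.Integrable (fun w => ‖Ψ w‖) := by simpa using hQ.2 0
    refine iF.mono' (by fun_prop : Continuous _).aestronglyMeasurable (Eventually.of_forall fun w => ?_)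
    rw [norm_mul, norm_mul, Complex.norm_exp_ofReal_mul_I, Complex.norm_exp_ofReal_mul_I]
    simp
  refine ⟨fun p => (wG c Ψ 0 p).re, Complex.reCLM.contDiff.comp (wG_smooth c hc hb Ψ hQ 0), ?_⟩
  have key : ∀ u v : ℝ, φ (!₂[u, v]) + φ (!₂[u, -v]) = 2 * wG c Ψ 0 (u, v ^ 2) := by
    intro u v
    rw [inv, inv, ← MeasureTheory.integral_add (hint u v) (hint u (-v)), wG, ← MeasureTheory.integral_const_mul]
    congr 1
    ext w
    rw [iteratedDeriv_zero]
    rw [show v ^ 2 * (2 * Real.pi * w 1) ^ 2 = (2 * Real.pi * w 1 * v) ^ 2 by ring, hcos, Complex.ofReal_cos,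
      Complex.cos]
    rw [show ((2 * Real.pi * w 1 * -v : ℝ) : ℂ) * Complex.I = - ((2 * Real.pi * w 1 * v : ℝ) : ℂ) * Complex.I by
      push_cast; ring]
    ring
  have t1 : Tendsto (fun p : ℝ × ℝ => (!₂[p.1, p.2] : E2)) (nhds 0) (nhds 0) := by
    have : Continuous (fun p : ℝ × ℝ => (!₂[p.1, p.2] : E2)) := by fun_prop
    convert! this.tendsto 0 using 2
    ext i; fin_cases i <;> simp
  have t2 : Tendsto (fun p : ℝ × ℝ => (!₂[p.1, -p.2] : E2)) (nhds 0) (nhds 0) := by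
    have : Continuous (fun p : ℝ × ℝ => (!₂[p.1, -p.2] : E2)) := by fun_prop
    convert! this.tendsto 0 using 2
    ext i; fin_cases i <;> simp
  filter_upwards [t1.eventually hφe, t2.eventually hφe] with p h1 h2
  have := key p.1 p.2
  rw [h1, h2] at this
  have := congrArg Complex.re this
  simpa using this


theorem ift {E : Type*} [NormedAddCommGroup E] [NormedSpace ℝ E] [FiniteDimensional ℝ E]
    (θ : E → E) (hθ : SN θ 0) (h0 : θ 0 = 0) (hinj : ∀ x, fderiv ℝ θ 0 x = 0 → x = 0) :
    ∃ ψ : E → E, ContDiff ℝ (⊤ : ℕ∞) ψ ∧ ψ 0 = 0 ∧ (∀ᶠ x in nhds 0, ψ (θ x) = x) ∧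
      (∀ᶠ y in nhds 0, θ (ψ y) = y) := by
  have : CompleteSpace E := FiniteDimensional.complete ℝ E
  have hc : ContDiffAt ℝ (⊤ : ℕ∞) θ 0 := hθ.self_of_nhds
  have hi : Function.Injective (fderiv ℝ θ 0).toLinearMap := by
    rw [← LinearMap.ker_eq_bot, LinearMap.ker_eq_bot']
    exact hinj
  let e : E ≃L[ℝ] E := (LinearEquiv.ofInjectiveEndo (fderiv ℝ θ 0).toLinearMap hi).toContinuousLinearEquiv
  have he : (e : E →L[ℝ] E) = fderiv ℝ θ 0 := by ext x; rfl
  have hd : HasFDerivAt θ (e : E →L[ℝ] E) 0 := by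
    rw [he]; exact (hc.differentiableAt (by simp)).hasFDerivAt
  let T := hc.toOpenPartialHomeomorph θ hd (by simp)
  have hT : ∀ x, T x = θ x := fun x => rfl
  have hs : (0:E) ∈ T.source := hc.mem_toOpenPartialHomeomorph_source hd (by simp)
  have ht : (0:E) ∈ T.target := by
    have := hc.image_mem_toOpenPartialHomeomorph_target hd (by simp)
    rwa [h0] at this
  have hsymm0 : T.symm 0 = 0 := by
    have := T.left_inv hs
    rwa [hT, h0] at this
  have hcs : ContinuousAt T.symm 0 := T.continuousAt_symm ht
  have hcd : ContinuousAt (fderiv ℝ θ) 0 := by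
    have := hc.fderiv_right (m := 0) (by simp)
    exact this.continuousAt
  have hrange : ∀ᶠ x in nhds (0:E), fderiv ℝ θ x ∈ Set.range (fun e : E ≃L[ℝ] E => (e : E →L[ℝ] E)) := by
    have := ContinuousLinearEquiv.nhds e
    rw [he] at this
    exact hcd this
  have hSN : SN T.symm 0 := by
    have h1 : ∀ᶠ y in nhds (0:E), ContDiffAt ℝ (⊤ : ℕ∞) θ (T.symm y) ∧
        fderiv ℝ θ (T.symm y) ∈ Set.range (fun e : E ≃L[ℝ] E => (e : E →L[ℝ] E)) := by
      have := hθ.and hrange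
      rw [← hsymm0] at this
      exact hcs.eventually this
    filter_upwards [h1, T.open_target.mem_nhds ht] with y hy hyt
    obtain ⟨h1, ⟨e', he'⟩⟩ := hy
    refine T.contDiffAt_symm (f₀' := e') hyt ?_ h1
    have := (h1.differentiableAt (by simp)).hasFDerivAt
    rw [← he'] at this
    exact this
  obtain ⟨ψ, hψ, -, hψe⟩ := cutoff _ _ hSN
  refine ⟨ψ, hψ, by rw [hψe.self_of_nhds, hsymm0], ?_, ?_⟩
  · have hcθ : Tendsto θ (nhds 0) (nhds 0) := by
      have := hc.continuousAt.tendsto; rwa [h0] at this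
    filter_upwards [hcθ.eventually hψe, T.open_source.mem_nhds hs] with x h1 h2
    rw [h1]; exact T.left_inv h2
  · filter_upwards [hψe, T.open_target.mem_nhds ht] with y h1 h2
    rw [h1]; exact T.right_inv h2

theorem IsLocalDiffeoAt.comp' {E F G : Type*} [NormedAddCommGroup E] [NormedSpace ℝ E]
    [NormedAddCommGroup F] [NormedSpace ℝ F] [NormedAddCommGroup G] [NormedSpace ℝ G]
    {g : F → G} {f : E → F} {p : E} (hg : IsLocalDiffeoAt g (f p)) (hf : IsLocalDiffeoAt f p) :
    IsLocalDiffeoAt (fun x => g (f x)) p := by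
  obtain ⟨hg1, ψg, hg2, hg3, hg4⟩ := hg
  obtain ⟨hf1, ψf, hf2, hf3, hf4⟩ := hf
  have e : ψg (g (f p)) = f p := hg3.self_of_nhds
  refine ⟨hg1.comp p hf1, fun y => ψf (ψg y), ?_, ?_, ?_⟩
  · refine ContDiffAt.comp (g := ψf) _ ?_ hg2
    rw [e]; exact hf2
  · filter_upwards [hf3, hf1.continuousAt.eventually hg3] with x h1 h2
    rw [h2, h1]
  · have : Tendsto ψg (nhds (g (f p))) (nhds (f p)) := by
      have := hg2.continuousAt.tendsto; rwa [e] at this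
    filter_upwards [hg4, this.eventually hf4] with y h1 h2
    rw [h2, h1]

theorem AEquivAt.trans' {f g k : ℝ × ℝ → R3} {p q r : ℝ × ℝ} (h1 : AEquivAt f p g q)
    (h2 : AEquivAt g q k r) : AEquivAt f p k r := by
  obtain ⟨φ1, Φ1, a1, b1, c1, d1⟩ := h1
  obtain ⟨φ2, Φ2, a2, b2, c2, d2⟩ := h2
  have e : Φ1 (f p) = g q := by
    have := d1.self_of_nhds; rwa [b1] at this
  refine ⟨fun x => φ1 (φ2 x), fun y => Φ2 (Φ1 y), ?_, by simp [b2, b1], ?_, ?_⟩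
  · refine IsLocalDiffeoAt.comp' ?_ a2
    rw [b2]; exact a1
  · refine IsLocalDiffeoAt.comp' ?_ c1
    rw [e]; exact c2
  · have : Tendsto φ2 (nhds r) (nhds q) := by
      have := a2.1.continuousAt.tendsto; rwa [b2] at this
    filter_upwards [this.eventually d1, d2] with x h1 h2
    rw [h1, h2]

theorem isLocalDiffeoAt_of_inv {E F : Type*} [NormedAddCommGroup E] [NormedSpace ℝ E]
    [NormedAddCommGroup F] [NormedSpace ℝ F] {f : E → F} {g : F → E} (p : E)
    (hf : ContDiff ℝ (⊤ : ℕ∞) f) (hg : ContDiff ℝ (⊤ : ℕ∞) g)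
    (h1 : ∀ x, g (f x) = x) (h2 : ∀ y, f (g y) = y) : IsLocalDiffeoAt f p :=
  ⟨hf.contDiffAt, g, hg.contDiffAt, Eventually.of_forall h1, Eventually.of_forall h2⟩

theorem fderiv_eq_pupv {E : Type*} [NormedAddCommGroup E] [NormedSpace ℝ E]
    (F : ℝ × ℝ → E) (p x : ℝ × ℝ) : fderiv ℝ F p x = x.1 • pu F p + x.2 • pv F p := by
  simp only [pu, pv, ← map_smul, ← map_add]
  congr 1
  ext <;> simp

/-- cuspidal cross cap normal form, step 3 -/
theorem step3 (b : ℝ × ℝ → ℝ) (hb : ContDiff ℝ (⊤ : ℕ∞) b) (h0 : b 0 = 0) (hu : pu b 0 ≠ 0) :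
    AEquivAt (fun x : ℝ × ℝ => ![x.1, x.2 ^ 2, x.2 ^ 3 * b (x.1, x.2 ^ 2)]) 0
      (fun x : ℝ × ℝ => ![x.1, x.2 ^ 2, x.1 * x.2 ^ 3]) 0 := by
  have hd := (hb.differentiable (by simp)) 0
  have hθd : HasFDerivAt (fun p : ℝ × ℝ => (b p, p.2)) ((fderiv ℝ b 0).prod (ContinuousLinearMap.snd ℝ ℝ ℝ)) 0 :=
    hd.hasFDerivAt.prodMk hasFDerivAt_snd
  obtain ⟨ψ, hψ, hψ0, hl, hr⟩ := ift (fun p : ℝ × ℝ => (b p, p.2))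
    (Eventually.of_forall fun q => (hb.prodMk contDiff_snd).contDiffAt) (by simp [h0]) (by
      intro x hx
      rw [hθd.fderiv] at hx
      simp only [ContinuousLinearMap.prod_apply, ContinuousLinearMap.coe_snd', Prod.mk_eq_zero] at hx
      obtain ⟨h1, h2⟩ := hx
      rw [fderiv_eq_pupv, h2] at h1
      simp [hu] at h1
      exact Prod.ext h1 h2)
  have hr' : ∀ᶠ y : ℝ × ℝ in nhds 0, b (ψ y) = y.1 ∧ (ψ y).2 = y.2 := by
    filter_upwards [hr] with y hy
    rw [Prod.ext_iff] at hy
    exact hy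
  have tsq : Tendsto (fun x : ℝ × ℝ => (x.1, x.2 ^ 2)) (nhds 0) (nhds 0) := by
    have : Continuous (fun x : ℝ × ℝ => (x.1, x.2 ^ 2)) := by fun_prop
    have h := this.tendsto 0
    have e : ((0 : ℝ × ℝ).1, (0 : ℝ × ℝ).2 ^ 2) = (0 : ℝ × ℝ) := by ext <;> simp
    rw [e] at h
    exact h
  have hr2 := tsq.eventually hr'
  have hl2 := tsq.eventually hl
  have t3 : Tendsto (fun y : R3 => (y 0, y 1)) (nhds 0) (nhds 0) := by
    have : Continuous (fun y : R3 => (y 0, y 1)) := by fun_prop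
    exact this.tendsto 0
  refine ⟨fun x => ((ψ (x.1, x.2 ^ 2)).1, x.2), fun y => ![b (y 0, y 1), y 1, y 2], ?_, ?_, ?_, ?_⟩
  · refine ⟨ContDiff.contDiffAt (by fun_prop), fun x => (b (x.1, x.2 ^ 2), x.2), ContDiff.contDiffAt (by fun_prop), ?_, ?_⟩
    · filter_upwards [hr2] with x ⟨h1, h2⟩
      have e : ((ψ (x.1, x.2 ^ 2)).1, x.2 ^ 2) = ψ (x.1, x.2 ^ 2) := Prod.ext rfl h2.symm
      change (b ((ψ (x.1, x.2 ^ 2)).1, x.2 ^ 2), x.2) = x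
      rw [e, h1]
    · have e0 : ((ψ ((0 : ℝ × ℝ).1, (0 : ℝ × ℝ).2 ^ 2)).1, (0 : ℝ × ℝ).2) = (0 : ℝ × ℝ) := by
        have : ((0 : ℝ × ℝ).1, (0 : ℝ × ℝ).2 ^ 2) = (0 : ℝ × ℝ) := by ext <;> simp
        rw [this, hψ0]
      beta_reduce
      rw [e0]
      filter_upwards [hl2] with x h1
      change ((ψ (b (x.1, x.2 ^ 2), x.2 ^ 2)).1, x.2) = x
      have h1' : ψ (b (x.1, x.2 ^ 2), x.2 ^ 2) = (x.1, x.2 ^ 2) := h1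
      rw [h1']
  · have : ((0 : ℝ × ℝ).1, (0 : ℝ × ℝ).2 ^ 2) = (0 : ℝ × ℝ) := by ext <;> simp
    beta_reduce
    rw [this, hψ0]
  · have e1 : (![(0 : ℝ × ℝ).1, (0 : ℝ × ℝ).2 ^ 2, (0 : ℝ × ℝ).2 ^ 3 * b ((0 : ℝ × ℝ).1, (0 : ℝ × ℝ).2 ^ 2)] : R3) = 0 := by
      ext i; fin_cases i <;> simp
    beta_reduce
    rw [e1]
    refine ⟨ContDiff.contDiffAt ?_, fun y => ![(ψ (y 0, y 1)).1, y 1, y 2], ContDiff.contDiffAt ?_, ?_, ?_⟩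
    · rw [contDiff_pi]; intro i; fin_cases i <;> simp <;> fun_prop
    · rw [contDiff_pi]; intro i; fin_cases i <;> simp <;> fun_prop
    · filter_upwards [t3.eventually hl] with y hy
      ext i; fin_cases i <;> simp [hy]
    · have e2 : (![b ((0:R3) 0, (0:R3) 1), (0:R3) 1, (0:R3) 2] : R3) = 0 := by
        have : (((0:R3) 0, (0:R3) 1) : ℝ × ℝ) = 0 := rfl
        rw [this, h0]
        ext i; fin_cases i <;> simp
      beta_reduce
      rw [e2]
      filter_upwards [t3.eventually hr'] with y ⟨h1, h2⟩
      have : ((ψ (y 0, y 1)).1, y 1) = ψ (y 0, y 1) := Prod.ext rfl h2.symm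
      ext i; fin_cases i
      · simp [this, h1]
      · simp
      · simp
  · filter_upwards [hr2] with x ⟨h1, h2⟩
    have : ((ψ (x.1, x.2 ^ 2)).1, x.2 ^ 2) = ψ (x.1, x.2 ^ 2) := Prod.ext rfl h2.symm
    ext i; fin_cases i
    · simp [this, h1]
    · simp
    · simp [this, h1, mul_comm]


theorem eq_of_dense {E : Type*} [TopologicalSpace E] [T2Space E] {F G : ℝ × ℝ → E} {p : ℝ × ℝ}
    (hF : ContinuousAt F p)
    (hG : ContinuousAt G p) (h : ∀ᶠ y in nhds p, y.2 ≠ 0 → F y = G y) : F p = G p := by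
  have hd : Dense {y : ℝ × ℝ | y.2 ≠ 0} := (dense_compl_singleton (0:ℝ)).preimage isOpenMap_snd
  have : (nhdsWithin p {y : ℝ × ℝ | y.2 ≠ 0}).NeBot := mem_closure_iff_nhdsWithin_neBot.1 (hd p)
  refine tendsto_nhds_unique_of_eventuallyEq (l := nhdsWithin p {y : ℝ × ℝ | y.2 ≠ 0})
    (hF.mono_left nhdsWithin_le_nhds)
    (hG.mono_left nhdsWithin_le_nhds) ?_
  filter_upwards [nhdsWithin_le_nhds h, self_mem_nhdsWithin] with y h1 h2 using h1 h2

theorem pu_comp_apply {C : ℝ × ℝ → R3} {p : ℝ × ℝ} (hC : DifferentiableAt ℝ C p) (i : Fin 3) :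
    pu (fun q => C q i) p = pu C p i := by
  simp only [pu]
  rw [fderiv_apply hC]
  rfl

theorem pv_comp_apply {C : ℝ × ℝ → R3} {p : ℝ × ℝ} (hC : DifferentiableAt ℝ C p) (i : Fin 3) :
    pv (fun q => C q i) p = pv C p i := by
  simp only [pv]
  rw [fderiv_apply hC]
  rfl

theorem nfA (C ν : ℝ × ℝ → R3) (σ V1 V2 : ℝ × ℝ → ℝ) (hC : ContDiff ℝ (⊤ : ℕ∞) C)
    (hν : ContDiff ℝ (⊤ : ℕ∞) ν) (hσ : ContDiff ℝ (⊤ : ℕ∞) σ) (hV1 : ContDiff ℝ (⊤ : ℕ∞) V1)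
    (hV2 : ContDiff ℝ (⊤ : ℕ∞) V2) (hV : ∀ p, V1 p • pu C p + V2 p • pv C p = σ p • ν p)
    (hV20 : V2 0 ≠ 0) (hV10 : V1 0 = 0) (hσ0 : σ 0 = 0) (hσv : pv σ 0 ≠ 0)
    (hC0 : C 0 = 0) (hCu : pu C 0 = ![1, 0, 0]) (hν0 : ν 0 = ![0, 1, 0]) :
    ∃ ψ : ℝ × ℝ → ℝ × ℝ, IsLocalDiffeoAt ψ 0 ∧ ψ 0 = 0 ∧
    ∃ (a l : ℝ → ℝ) (β γ : ℝ × ℝ → ℝ), ContDiff ℝ (⊤ : ℕ∞) a ∧ ContDiff ℝ (⊤ : ℕ∞) l ∧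
      ContDiff ℝ (⊤ : ℕ∞) β ∧ ContDiff ℝ (⊤ : ℕ∞) γ ∧ β 0 ≠ 0 ∧
      ∀ᶠ y in nhds (0 : ℝ × ℝ), C (ψ y) =
        ![y.1, a y.1 + y.2 ^ 2 * β y, l y.1 + y.2 ^ 2 * γ y] := by
  have hCd : Differentiable ℝ C := hC.differentiable (by simp)
  have hσd : Differentiable ℝ σ := hσ.differentiable (by simp)
  have hCi : ∀ i, ContDiff ℝ (⊤ : ℕ∞) (fun p => C p i) := fun i => contDiff_pi.1 hC i
  have hCv : pv C 0 = 0 := by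
    have := hV 0
    rw [hV10, hσ0] at this
    simpa [hV20] using this
  have hc0u : pu (fun p => C p 0) 0 = 1 := by rw [pu_comp_apply (hCd 0), hCu]; rfl
  have hc0v : pv (fun p => C p 0) 0 = 0 := by rw [pv_comp_apply (hCd 0), hCv]; rfl
  let θ : ℝ × ℝ → ℝ × ℝ := fun p => (C p 0, σ p)
  have hθ : ContDiff ℝ (⊤ : ℕ∞) θ := (hCi 0).prodMk hσ
  have hθd : ∀ p, HasFDerivAt θ ((fderiv ℝ (fun p => C p 0) p).prod (fderiv ℝ σ p)) p := fun p =>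
    (((hCi 0).differentiable (by simp)) p).hasFDerivAt.prodMk (hσd p).hasFDerivAt
  have hθ0 : θ 0 = 0 := by simp only [θ, hC0, hσ0]; rfl
  obtain ⟨ψ, hψ, hψ0, hl, hr⟩ := ift θ (Eventually.of_forall fun q => hθ.contDiffAt) hθ0 (by
      intro x hx
      rw [(hθd 0).fderiv] at hx
      simp only [ContinuousLinearMap.prod_apply, Prod.mk_eq_zero] at hx
      obtain ⟨h1, h2⟩ := hx
      rw [fderiv_eq_pupv, hc0u, hc0v] at h1
      rw [fderiv_eq_pupv] at h2
      have h1' : x.1 = 0 := by simpa using h1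
      rw [h1'] at h2
      have h2' : x.2 = 0 := by simpa [hσv] using h2
      exact Prod.ext h1' h2')
  have hψd : Differentiable ℝ ψ := hψ.differentiable (by simp)
  have hψc : Tendsto ψ (nhds 0) (nhds 0) := by
    have := hψ.continuous.tendsto 0; rwa [hψ0] at this
  let D : ℝ × ℝ → R3 := fun y => C (ψ y)
  have hD : ContDiff ℝ (⊤ : ℕ∞) D := hC.comp hψ
  have hDi : ∀ i, ContDiff ℝ (⊤ : ℕ∞) (fun p => D p i) := fun i => contDiff_pi.1 hD i
  let w : ℝ × ℝ → ℝ × ℝ := fun y => pv ψ y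
  have hw : ContDiff ℝ (⊤ : ℕ∞) w := smooth_pv hψ
  -- derivative formula
  have hcu : ∀ᶠ y in nhds (0 : ℝ × ℝ), pu C (ψ y) 0 ≠ 0 := by
    have h1 : Continuous (fun p => pu C p 0) := (contDiff_pi.1 (smooth_pu hC) 0).continuous
    refine hψc.eventually (h1.continuousAt.eventually_ne ?_)
    rw [hCu]; simp
  have hv2 : ∀ᶠ y in nhds (0 : ℝ × ℝ), V2 (ψ y) ≠ 0 :=
    hψc.eventually (hV2.continuous.continuousAt.eventually_ne hV20)
  have hwθ : ∀ᶠ y in nhds (0 : ℝ × ℝ), fderiv ℝ (fun p => C p 0) (ψ y) (w y) = 0 ∧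
      fderiv ℝ σ (ψ y) (w y) = 1 := by
    filter_upwards [hr.eventually_nhds] with y hy
    have h1 : HasFDerivAt (fun y => θ (ψ y)) _ y := (hθd (ψ y)).comp y (hψd y).hasFDerivAt
    have h2 : HasFDerivAt (fun y => θ (ψ y)) (ContinuousLinearMap.id ℝ (ℝ × ℝ)) y :=
      (hasFDerivAt_id y).congr_of_eventuallyEq hy
    have h3 := DFunLike.congr_fun (h1.unique h2) (0, 1)
    simp only [ContinuousLinearMap.comp_apply, ContinuousLinearMap.prod_apply,
      ContinuousLinearMap.id_apply, Prod.mk.injEq] at h3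
    exact h3
  have hDv : ∀ᶠ y in nhds (0 : ℝ × ℝ), pv D y = (y.2 * ((w y).2 / V2 (ψ y))) •
      (ν (ψ y) - (ν (ψ y) 0 / pu C (ψ y) 0) • pu C (ψ y)) := by
    filter_upwards [hcu, hv2, hwθ, hr] with y h1 h2 h3 h4
    have e1 : pv D y = fderiv ℝ C (ψ y) (w y) := by
      have : HasFDerivAt D _ y := (hCd (ψ y)).hasFDerivAt.comp y (hψd y).hasFDerivAt
      simp only [pv]
      rw [this.fderiv]; rfl
    have e2 := hV (ψ y)
    have e3 := h3.1
    rw [fderiv_eq_pupv, pu_comp_apply (hCd _), pv_comp_apply (hCd _)] at e3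
    have e4 : σ (ψ y) = y.2 := congrArg Prod.snd h4
    rw [e4] at e2
    rw [e1, fderiv_eq_pupv]
    have e50 := congrFun e2 0
    simp only [Pi.add_apply, Pi.smul_apply, smul_eq_mul] at e50 e3
    ext i
    have e5 := congrFun e2 i
    simp only [Pi.add_apply, Pi.smul_apply, smul_eq_mul, Pi.sub_apply] at e5 ⊢
    generalize pu C (ψ y) 0 = p0 at *
    generalize pv C (ψ y) 0 = q0 at *
    generalize ν (ψ y) 0 = n0 at *
    generalize pu C (ψ y) i = pi at *
    generalize pv C (ψ y) i = qi at *
    generalize ν (ψ y) i = ni at *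
    generalize V2 (ψ y) = v2 at *
    generalize V1 (ψ y) = v1 at *
    field_simp
    linear_combination ((w y).2 * p0) * e5 + (v2 * pi) * e3 - ((w y).2 * pi) * e50
  have hDv0 : ∀ᶠ y in nhds (0 : ℝ × ℝ), y.2 = 0 → pv D y = 0 := by
    filter_upwards [hDv] with y hy h0
    rw [hy, h0]; simp
  have hD0 : ∀ᶠ y in nhds (0 : ℝ × ℝ), D y 0 = y.1 := by
    filter_upwards [hr] with y hy
    exact congrArg Prod.fst hy
  obtain ⟨β, hβ, hβe⟩ := hadamard2 _ (hDi 1)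
  obtain ⟨γ, hγ, hγe⟩ := hadamard2 _ (hDi 2)
  have hax : Tendsto (fun y : ℝ × ℝ => (y.1, (0 : ℝ))) (nhds 0) (nhds 0) := by
    have : Continuous (fun y : ℝ × ℝ => (y.1, (0 : ℝ))) := by fun_prop
    exact this.tendsto 0
  have hform : ∀ i, ∀ᶠ y in nhds (0 : ℝ × ℝ), pv (fun y => D y i) (y.1, 0) = 0 := by
    intro i
    filter_upwards [hax.eventually hDv0] with y hy
    rw [pv_comp_apply (hD.differentiable (by simp) _), hy rfl]; rfl
  have hk1 : ∀ᶠ y in nhds (0 : ℝ × ℝ), D y 1 = D (y.1, 0) 1 + y.2 ^ 2 * β y := by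
    filter_upwards [hform 1] with y hy
    have := hβe y.1 y.2
    rw [hy] at this
    simpa using this
  have hk2 : ∀ᶠ y in nhds (0 : ℝ × ℝ), D y 2 = D (y.1, 0) 2 + y.2 ^ 2 * γ y := by
    filter_upwards [hform 2] with y hy
    have := hγe y.1 y.2
    rw [hy] at this
    simpa using this
  have hsl : ContDiff ℝ (⊤ : ℕ∞) (fun u : ℝ => D (u, 0)) := hD.comp (by fun_prop)
  refine ⟨ψ, ⟨hψ.contDiffAt, θ, hθ.contDiffAt, hr, ?_⟩, hψ0, fun u => D (u, 0) 1,
    fun u => D (u, 0) 2, β, γ, contDiff_pi.1 hsl 1, contDiff_pi.1 hsl 2, hβ, hγ, ?_, ?_⟩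
  · rw [hψ0]; exact hl
  · -- β 0 ≠ 0
    have hβv : ContDiff ℝ (⊤ : ℕ∞) (pv β) := smooth_pv hβ
    have hCuc : Continuous (pu C) := (smooth_pu hC).continuous
    have e1 : (fun y : ℝ × ℝ => 2 * β y + y.2 * pv β y) 0 =
        (fun y : ℝ × ℝ => ((w y).2 / V2 (ψ y)) *
          (ν (ψ y) 1 - (ν (ψ y) 0 / pu C (ψ y) 0) * pu C (ψ y) 1)) 0 := by
      refine eq_of_dense (F := fun y : ℝ × ℝ => 2 * β y + y.2 * pv β y)
        (G := fun y : ℝ × ℝ => ((w y).2 / V2 (ψ y)) *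
          (ν (ψ y) 1 - (ν (ψ y) 0 / pu C (ψ y) 0) * pu C (ψ y) 1)) (p := 0) ?_ ?_ ?_
      · exact ((continuous_const.mul hβ.continuous).add
          (continuous_snd.mul hβv.continuous)).continuousAt
      · have i1 : ContinuousAt (fun y => V2 (ψ y)) 0 := (hV2.continuous.comp hψ.continuous).continuousAt
        have i2 : ∀ i, ContinuousAt (fun y => pu C (ψ y) i) 0 := fun i =>
          ((continuous_apply i).comp (hCuc.comp hψ.continuous)).continuousAt
        have i3 : ∀ i, ContinuousAt (fun y => ν (ψ y) i) 0 := fun i =>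
          ((continuous_apply i).comp (hν.continuous.comp hψ.continuous)).continuousAt
        have i4 : ContinuousAt (fun y => (w y).2) 0 := (continuous_snd.comp hw.continuous).continuousAt
        exact (i4.div i1 hv2.self_of_nhds).mul
          ((i3 1).sub (((i3 0).div (i2 0) hcu.self_of_nhds).mul (i2 1)))
      · filter_upwards [hDv, hk1.eventually_nhds] with y h1 h2 h3
        have h4 : pv (fun y => D y 1) y = y.2 * (2 * β y + y.2 * pv β y) := by
          have hh : HasFDerivAt (fun y : ℝ × ℝ => D (y.1, 0) 1 + y.2 ^ 2 * β y) _ y :=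
            HasFDerivAt.add (HasFDerivAt.comp (g := fun u : ℝ => D (u, 0) 1) y
              ((contDiff_pi.1 hsl 1).differentiable (by simp) y.1).hasFDerivAt hasFDerivAt_fst)
              (((hasFDerivAt_snd (p := y)).pow 2).mul (hβ.differentiable (by simp) y).hasFDerivAt)
          have := (hh.congr_of_eventuallyEq h2).fderiv
          simp only [pv]
          rw [this]
          simp
          ring
        have h5 := congrFun h1 1
        rw [pv_comp_apply (hD.differentiable (by simp) _), h5] at h4
        simp only [Pi.smul_apply, smul_eq_mul, Pi.sub_apply] at h4
        apply mul_left_cancel₀ h3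
        rw [← h4]; ring
    simp only [hψ0, hν0, hCu] at e1
    have hw0 : (w 0).2 ≠ 0 := by
      intro h
      obtain ⟨e2, e3⟩ := hwθ.self_of_nhds
      rw [hψ0, fderiv_eq_pupv] at e2 e3
      rw [hc0u, hc0v] at e2
      rw [h] at e3
      have : (w 0).1 = 0 := by simpa using e2
      rw [this] at e3
      simp at e3
    intro hb
    simp [hb] at e1
    exact (div_ne_zero hw0 hV20) e1.symm
  · filter_upwards [hD0, hk1, hk2] with y h0 h1 h2
    ext i
    fin_cases i
    · exact h0
    · exact h1
    · exact h2

theorem nfB (β γ : ℝ × ℝ → ℝ) (a l : ℝ → ℝ) (ha : ContDiff ℝ (⊤ : ℕ∞) a)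
    (hlc : ContDiff ℝ (⊤ : ℕ∞) l)
    (hβ : ContDiff ℝ (⊤ : ℕ∞) β) (hγ : ContDiff ℝ (⊤ : ℕ∞) γ) (hβ0 : β 0 ≠ 0) (D : ℝ × ℝ → R3)
    (hD : ∀ᶠ y in nhds (0 : ℝ × ℝ), D y =
        ![y.1, a y.1 + y.2 ^ 2 * β y, l y.1 + y.2 ^ 2 * γ y]) :
    ∃ b : ℝ × ℝ → ℝ, ContDiff ℝ (⊤ : ℕ∞) b ∧
      AEquivAt D 0 (fun x : ℝ × ℝ => ![x.1, x.2 ^ 2, x.2 ^ 3 * b (x.1, x.2 ^ 2)]) 0 := by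
  obtain ⟨s, hs, hsβ⟩ : ∃ s : ℝ, s * s = 1 ∧ 0 < s * β 0 := by
    rcases lt_or_gt_of_ne hβ0 with h | h
    · exact ⟨-1, by norm_num, by linarith⟩
    · exact ⟨1, by norm_num, by linarith⟩
  have hsp : ∀ᶠ y in nhds (0 : ℝ × ℝ), 0 < s * β y :=
    (continuous_const.mul hβ.continuous).continuousAt.eventually_const_lt hsβ
  let r : ℝ × ℝ → ℝ := fun y => Real.sqrt (s * β y)
  have hr : SN r 0 := by
    filter_upwards [hsp] with y hy
    exact (contDiff_const.mul hβ).contDiffAt.sqrt hy.ne'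
  have hr0 : r 0 ≠ 0 := (Real.sqrt_pos.2 hsβ).ne'
  let θ : ℝ × ℝ → ℝ × ℝ := fun y => (y.1, y.2 * r y)
  have hθ : SN θ 0 := by
    filter_upwards [hr] with y hy
    exact contDiffAt_fst.prodMk (contDiffAt_snd.mul hy)
  have hrd : DifferentiableAt ℝ r 0 := hr.self_of_nhds.differentiableAt (by simp)
  have hθd : HasFDerivAt θ ((ContinuousLinearMap.fst ℝ ℝ ℝ).prod
      ((0 : ℝ × ℝ).2 • fderiv ℝ r 0 + r 0 • ContinuousLinearMap.snd ℝ ℝ ℝ)) 0 :=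
    hasFDerivAt_fst.prodMk (hasFDerivAt_snd.mul hrd.hasFDerivAt)
  obtain ⟨ψ, hψ, hψ0, hl, hrr⟩ := ift θ hθ (by simp only [θ]; ext <;> simp) (by
    intro x hx
    rw [hθd.fderiv] at hx
    simp [hr0] at hx
    exact Prod.ext hx.1 hx.2)
  have hψc : Tendsto ψ (nhds 0) (nhds 0) := by
    have := hψ.continuous.tendsto 0; rwa [hψ0] at this
  have hg : SN (fun z => γ (ψ z) / (s * β (ψ z))) 0 := by
    filter_upwards [hψc.eventually hsp] with z hz
    exact (hγ.comp hψ).contDiffAt.div (contDiff_const.mul (hβ.comp hψ)).contDiffAt hz.ne'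
  obtain ⟨g, hgc, -, hge⟩ := cutoff _ _ hg
  obtain ⟨e, he, hee⟩ := whitney_even g hgc
  obtain ⟨δ, hδ, hδe, -⟩ := hadamard1 g hgc
  obtain ⟨b, hb, hbe⟩ := whitney_even δ hδ
  refine ⟨b, hb, ψ, fun y => ![y 0, s * (y 1 - a (y 0)),
    y 2 - l (y 0) - s * (y 1 - a (y 0)) * e (y 0, s * (y 1 - a (y 0)))],
    ⟨hψ.contDiffAt, θ, ?_, hrr, ?_⟩, hψ0, ?_, ?_⟩
  · rw [hψ0]; exact hθ.self_of_nhds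
  · rw [hψ0]; exact hl
  · refine isLocalDiffeoAt_of_inv (g := fun z => ![z 0, s * z 1 + a (z 0),
      z 2 + l (z 0) + z 1 * e (z 0, z 1)]) _ ?_ ?_ ?_ ?_
    · rw [contDiff_pi]; intro i; fin_cases i <;> simp <;> fun_prop
    · rw [contDiff_pi]; intro i; fin_cases i <;> simp <;> fun_prop
    · intro x; ext i; fin_cases i
      · simp
      · simp
        linear_combination (x 1 - a (x 0)) * hs
      · simp
        ring
    · intro x
      have : s * (s * x 1 + a (x 0) - a (x 0)) = x 1 := by linear_combination (x 1) * hs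
      ext i; fin_cases i
      · simp
      · simp
        linear_combination (x 1) * hs
      · simp only [Matrix.cons_val, Matrix.cons_val_zero, Matrix.cons_val_one, this, Fin.reduceFinMk]
        ring
  · filter_upwards [hψc.eventually hD, hrr, hψc.eventually hsp, hge, hee, hbe] with z h1 h2 h3 h4 h5 h6
    have h7 : (θ (ψ z)).1 = z.1 := congrArg Prod.fst h2
    change (ψ z).1 = z.1 at h7
    have h8 : (θ (ψ z)).2 = z.2 := congrArg Prod.snd h2
    change (ψ z).2 * Real.sqrt (s * β (ψ z)) = z.2 at h8
    have h9 : z.2 ^ 2 = (ψ z).2 ^ 2 * (s * β (ψ z)) := by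
      rw [← h8, mul_pow, Real.sq_sqrt h3.le]
    have h10 : s * ((ψ z).2 ^ 2 * β (ψ z)) = z.2 ^ 2 := by rw [h9]; ring
    have h11 : (ψ z).2 ^ 2 * γ (ψ z) = z.2 ^ 2 * g z := by
      rw [h4, h9]
      rw [mul_assoc, mul_div_cancel₀ _ h3.ne']
    have h12 : g z = e (z.1, z.2 ^ 2) + z.2 * b (z.1, z.2 ^ 2) := by
      have k1 := hδe z.1 z.2
      have k2 := hδe z.1 (-z.2)
      have : g z = g (z.1, z.2) := rfl
      rw [this]
      linear_combination (1 / 2 : ℝ) * h5 + (z.2 / 2) * h6 + (1 / 2 : ℝ) * k1 - (1 / 2 : ℝ) * k2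
    rw [h1]
    ext i; fin_cases i
    · simpa using h7
    · simpa using h10
    · simp only [Matrix.cons_val, Matrix.cons_val_zero, Matrix.cons_val_one, Fin.reduceFinMk, add_sub_cancel_left]
      rw [h10, h7, h11, h12]
      ring

theorem pu_clm_sub (A : R3 →L[ℝ] R3) (c : R3) {C : ℝ × ℝ → R3} (p : ℝ × ℝ)
    (hC : DifferentiableAt ℝ C p) :
    pu (fun q => A (C q - c)) p = A (pu C p) ∧ pv (fun q => A (C q - c)) p = A (pv C p) := by
  have : HasFDerivAt (fun q => A (C q - c)) _ p :=
    A.hasFDerivAt.comp p (hC.hasFDerivAt.sub_const c)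
  simp only [pu, pv, this.fderiv]
  exact ⟨rfl, rfl⟩

theorem normal_form (C ν : ℝ × ℝ → R3) (σ V1 V2 : ℝ × ℝ → ℝ) (hC : ContDiff ℝ (⊤ : ℕ∞) C)
    (hν : ContDiff ℝ (⊤ : ℕ∞) ν) (hσ : ContDiff ℝ (⊤ : ℕ∞) σ) (hV1 : ContDiff ℝ (⊤ : ℕ∞) V1)
    (hV2 : ContDiff ℝ (⊤ : ℕ∞) V2) (hV : ∀ p, V1 p • pu C p + V2 p • pv C p = σ p • ν p)
    (hV20 : V2 0 ≠ 0) (hV10 : V1 0 = 0) (hσ0 : σ 0 = 0) (hσv : pv σ 0 ≠ 0)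
    (X : R3) (hli : LinearIndependent ℝ ![pu C 0, ν 0, X]) :
    ∃ b : ℝ × ℝ → ℝ, ContDiff ℝ (⊤ : ℕ∞) b ∧
      AEquivAt C 0 (fun x : ℝ × ℝ => ![x.1, x.2 ^ 2, x.2 ^ 3 * b (x.1, x.2 ^ 2)]) 0 := by
  let B := basisOfLinearIndependentOfCardEqFinrank hli (by simp)
  let A : R3 ≃L[ℝ] R3 := B.equivFun.toContinuousLinearEquiv
  have hA : ∀ i, A (![pu C 0, ν 0, X] i) = Pi.single i 1 := by
    intro i
    have : ![pu C 0, ν 0, X] i = B i := by simp [B]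
    rw [this]
    ext j
    simp [A, Pi.single_apply, Finsupp.single_apply, eq_comm]
  have hA0 : A (pu C 0) = ![1, 0, 0] := by
    rw [show pu C 0 = ![pu C 0, ν 0, X] 0 from rfl, hA]
    ext j; fin_cases j <;> simp
  have hA1 : A (ν 0) = ![0, 1, 0] := by
    rw [show ν 0 = ![pu C 0, ν 0, X] 1 from rfl, hA]
    ext j; fin_cases j <;> simp
  have hCd : Differentiable ℝ C := hC.differentiable (by simp)
  have hpp := fun p => pu_clm_sub (A : R3 →L[ℝ] R3) (C 0) p (hCd p)
  have hC' : ContDiff ℝ (⊤ : ℕ∞) (fun q => A (C q - C 0)) :=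
    A.contDiff.comp (hC.sub contDiff_const)
  obtain ⟨ψ, hψ, hψ0, a, l, β, γ, ha, hl, hβ, hγ, hβ0, hD⟩ := nfA (fun q => A (C q - C 0))
    (fun q => A (ν q)) σ V1 V2 hC' (A.contDiff.comp hν) hσ hV1 hV2
    (by
      intro p
      have h1 := (hpp p).1
      have h2 := (hpp p).2
      simp only [ContinuousLinearEquiv.coe_coe] at h1 h2
      rw [h1, h2, ← map_smul, ← map_smul, ← map_add, hV, map_smul])
    hV20 hV10 hσ0 hσv (by simp)
    (by
      have h1 := (hpp 0).1
      simp only [ContinuousLinearEquiv.coe_coe] at h1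
      rw [h1, hA0])
    hA1
  obtain ⟨b, hb, hAE⟩ := nfB β γ a l ha hl hβ hγ hβ0 (fun y => A (C (ψ y) - C 0)) hD
  refine ⟨b, hb, AEquivAt.trans' ?_ hAE⟩
  refine ⟨ψ, fun y => A (y - C 0), hψ, hψ0, ?_, Eventually.of_forall fun x => rfl⟩
  refine isLocalDiffeoAt_of_inv (g := fun z => A.symm z + C 0) _ ?_ ?_ ?_ ?_
  · exact A.contDiff.comp (contDiff_id.sub contDiff_const)
  · exact A.symm.contDiff.add contDiff_const
  · intro x; simp
  · intro x; simp


def det3 (a b c : R3) : ℝ :=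
  a 0 * (b 1 * c 2 - b 2 * c 1) - a 1 * (b 0 * c 2 - b 2 * c 0) + a 2 * (b 0 * c 1 - b 1 * c 0)

theorem det3_ne_of_inj (T : R3 →L[ℝ] R3) (hT : ∀ w, T w = 0 → w = 0) :
    det3 (T ![1, 0, 0]) (T ![0, 1, 0]) (T ![0, 0, 1]) ≠ 0 := by
  intro h
  let M : Matrix (Fin 3) (Fin 3) ℝ :=
    Matrix.of fun i j => (![T ![1, 0, 0], T ![0, 1, 0], T ![0, 0, 1]] : Fin 3 → R3) j i
  have hM : M.det = 0 := by
    rw [Matrix.det_fin_three]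
    simp only [det3] at h
    simp [M]
    linarith
  obtain ⟨v, hv, hv2⟩ := Matrix.exists_mulVec_eq_zero_iff.2 hM
  apply hv
  apply hT
  have hvv : v = v 0 • (![1, 0, 0] : R3) + v 1 • (![0, 1, 0] : R3) + v 2 • (![0, 0, 1] : R3) := by
    ext i; fin_cases i <;> simp
  rw [hvv, map_add, map_add, map_smul, map_smul, map_smul]
  ext i
  have := congrFun hv2 i
  simp [Matrix.mulVec, dotProduct, Fin.sum_univ_three, M] at this
  simp
  linarith

theorem li_of_det3 {a b c : R3} (h : det3 a b c ≠ 0) : LinearIndependent ℝ ![a, b, c] := by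
  have : (Matrix.of ![a, b, c]).det ≠ 0 := by
    rw [Matrix.det_fin_three]
    simp only [det3] at h
    simp
    intro h'
    apply h
    linarith
  exact Matrix.linearIndependent_rows_of_det_ne_zero this

theorem det3_of_li {a b c : R3} (h : LinearIndependent ℝ ![a, b, c]) : det3 a b c ≠ 0 := by
  have h1 : LinearIndependent ℝ (Matrix.of ![a, b, c]).row := h
  rw [Matrix.linearIndependent_rows_iff_isUnit, Matrix.isUnit_iff_isUnit_det, isUnit_iff_ne_zero,
    Matrix.det_fin_three] at h1
  simp at h1
  simp only [det3]
  intro h'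
  apply h1
  linarith

theorem cramer1 {a n x w z : R3} (h1 : dot3 x w = 0) (h2 : dot3 x a = 0) (h3 : dot3 x n = 0)
    (h4 : dot3 z a = 0) : det3 a n x * dot3 z w = det3 a w x * dot3 z n := by
  have key : det3 a n x * dot3 z w = det3 w n x * dot3 z a + det3 a w x * dot3 z n +
      (det3 z n w * dot3 x a + det3 a z w * dot3 x n + det3 a n z * dot3 x w) := by
    simp only [dot3, det3]; ring
  rw [key, h1, h2, h3, h4]; ring

theorem cramer2 {a b c x : R3} (h1 : dot3 x a = 0) (h2 : dot3 x b = 0) :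
    dot3 x x * det3 a b c = det3 a b x * dot3 x c := by
  have key : dot3 x x * det3 a b c = det3 x b c * dot3 x a + det3 a x c * dot3 x b +
      det3 a b x * dot3 x c := by
    simp only [dot3, det3]; ring
  rw [key, h1, h2]; ring

theorem det3_indep {a n x : R3} {α β : ℝ} (h : α • a + β • n = 0) (hd : det3 a n x ≠ 0) :
    α = 0 ∧ β = 0 := by
  have h0 := congrFun h 0
  have h1 := congrFun h 1
  have h2 := congrFun h 2
  simp only [Pi.add_apply, Pi.smul_apply, smul_eq_mul, Pi.zero_apply] at h0 h1 h2
  constructor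
  · apply (mul_eq_zero.1 (_ : α * det3 a n x = 0)).resolve_right hd
    simp only [det3]
    linear_combination (n 1 * x 2 - n 2 * x 1) * h0 - (n 0 * x 2 - n 2 * x 0) * h1 +
      (n 0 * x 1 - n 1 * x 0) * h2
  · apply (mul_eq_zero.1 (_ : β * det3 a n x = 0)).resolve_right hd
    simp only [det3]
    linear_combination - (a 1 * x 2 - a 2 * x 1) * h0 + (a 0 * x 2 - a 2 * x 0) * h1 -
      (a 0 * x 1 - a 1 * x 0) * h2

theorem ContDiff.dot3' {n : WithTop ℕ∞} {E : Type*} [NormedAddCommGroup E] [NormedSpace ℝ E]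
    {A B : E → R3} (hA : ContDiff ℝ n A) (hB : ContDiff ℝ n B) :
    ContDiff ℝ n (fun p => dot3 (A p) (B p)) := by
  have a := contDiff_pi.1 hA
  have b := contDiff_pi.1 hB
  simp only [dot3]
  exact (((a 0).mul (b 0)).add ((a 1).mul (b 1))).add ((a 2).mul (b 2))

theorem HasFDerivAt.dot3' {E : Type*} [NormedAddCommGroup E] [NormedSpace ℝ E]
    {A B : E → R3} {A' B' : E →L[ℝ] R3} {p : E} (hA : HasFDerivAt A A' p)
    (hB : HasFDerivAt B B' p) :
    ∃ L : E →L[ℝ] ℝ, HasFDerivAt (fun p => dot3 (A p) (B p)) L p ∧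
      ∀ w, L w = dot3 (A' w) (B p) + dot3 (A p) (B' w) := by
  have a := hasFDerivAt_pi'.1 hA
  have b := hasFDerivAt_pi'.1 hB
  refine ⟨_, (((a 0).mul (b 0)).add ((a 1).mul (b 1))).add ((a 2).mul (b 2)), ?_⟩
  intro w
  simp [dot3]
  ring

theorem fderiv_dot3 {E : Type*} [NormedAddCommGroup E] [NormedSpace ℝ E]
    {A B : E → R3} {p : E} (hA : DifferentiableAt ℝ A p) (hB : DifferentiableAt ℝ B p) (w : E) :
    fderiv ℝ (fun p => dot3 (A p) (B p)) p w =
      dot3 (fderiv ℝ A p w) (B p) + dot3 (A p) (fderiv ℝ B p w) := by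
  obtain ⟨L, h1, h2⟩ := HasFDerivAt.dot3' hA.hasFDerivAt hB.hasFDerivAt
  rw [h1.fderiv, h2]

theorem pu_dot3 {A B : ℝ × ℝ → R3} {p : ℝ × ℝ} (hA : DifferentiableAt ℝ A p)
    (hB : DifferentiableAt ℝ B p) :
    pu (fun p => dot3 (A p) (B p)) p = dot3 (pu A p) (B p) + dot3 (A p) (pu B p) :=
  fderiv_dot3 hA hB _

theorem pv_dot3 {A B : ℝ × ℝ → R3} {p : ℝ × ℝ} (hA : DifferentiableAt ℝ A p)
    (hB : DifferentiableAt ℝ B p) :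
    pv (fun p => dot3 (A p) (B p)) p = dot3 (pv A p) (B p) + dot3 (A p) (pv B p) :=
  fderiv_dot3 hA hB _

theorem pupv_comm {E : Type*} [NormedAddCommGroup E] [NormedSpace ℝ E] {F : ℝ × ℝ → E}
    (hF : ContDiff ℝ (⊤ : ℕ∞) F) (p : ℝ × ℝ) : pu (pv F) p = pv (pu F) p := by
  have hs : IsSymmSndFDerivAt ℝ F p := by
    apply ContDiffAt.isSymmSndFDerivAt (n := (⊤ : ℕ∞)) hF.contDiffAt
    rw [minSmoothness_of_isRCLikeNormedField]
    exact WithTop.coe_le_coe.2 (le_top : (2 : ℕ∞) ≤ ⊤)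
  have hd : DifferentiableAt ℝ (fderiv ℝ F) p :=
    ((hF.fderiv_right (m := 1) (WithTop.coe_le_coe.2 (le_top : (1 + 1 : ℕ∞) ≤ ⊤))).differentiable
      (by simp)) p
  have h1 : ∀ w x : ℝ × ℝ, fderiv ℝ (fun q => fderiv ℝ F q w) p x = fderiv ℝ (fderiv ℝ F) p x w := by
    intro w x
    rw [fderiv_clm_apply hd (differentiableAt_const w)]
    simp
  change fderiv ℝ (fun q => fderiv ℝ F q (0, 1)) p (1, 0) =
    fderiv ℝ (fun q => fderiv ℝ F q (1, 0)) p (0, 1)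
  rw [h1, h1]
  exact hs _ _

/-- derivative of the product of a continuous function with a function vanishing at `0` -/
theorem hasDerivAt_mul_of_zero {m g : ℝ → ℝ} {d : ℝ} (hm : ContinuousAt m 0)
    (hg : HasDerivAt g d 0) (h0 : g 0 = 0) : HasDerivAt (fun u => m u * g u) (m 0 * d) 0 := by
  rw [hasDerivAt_iff_tendsto_slope] at hg ⊢
  have : Tendsto m (nhdsWithin 0 {0}ᶜ) (nhds (m 0)) := hm.mono_left nhdsWithin_le_nhds
  refine (this.mul hg).congr ?_
  intro u
  simp [slope, h0]
  ring


def Gb (b : ℝ × ℝ → ℝ) (p : ℝ × ℝ) : R3 := ![p.1, p.2 ^ 2, p.2 ^ 3 * b p]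

def rG (b : ℝ × ℝ → ℝ) (p : ℝ × ℝ) : R3 := ![0, 2, 3 * p.2 * b p + p.2 ^ 2 * pv b p]

theorem Gb_smooth {b : ℝ × ℝ → ℝ} (hb : ContDiff ℝ (⊤ : ℕ∞) b) : ContDiff ℝ (⊤ : ℕ∞) (Gb b) := by
  unfold Gb
  rw [contDiff_pi]; intro i; fin_cases i <;> simp <;> fun_prop

theorem rG_smooth {b : ℝ × ℝ → ℝ} (hb : ContDiff ℝ (⊤ : ℕ∞) b) : ContDiff ℝ (⊤ : ℕ∞) (rG b) := by
  have := smooth_pv hb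
  unfold rG
  rw [contDiff_pi]; intro i; fin_cases i <;> simp <;> fun_prop

theorem Gb_fderiv {b : ℝ × ℝ → ℝ} (hb : ContDiff ℝ (⊤ : ℕ∞) b) (p w : ℝ × ℝ) :
    fderiv ℝ (Gb b) p w = ![w.1, 2 * p.2 * w.2, 3 * p.2 ^ 2 * b p * w.2 + p.2 ^ 3 * fderiv ℝ b p w] := by
  have hd := (Gb_smooth hb).differentiable (by simp) p
  have hbd := hb.differentiable (by simp) p
  have e : ∀ i, fderiv ℝ (Gb b) p w i = fderiv ℝ (fun q => Gb b q i) p w := by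
    intro i
    rw [fderiv_apply hd]; rfl
  ext i
  rw [e]
  fin_cases i
  · simp [Gb]
    rw [fderiv_fst]
    rfl
  · have : HasFDerivAt (fun q : ℝ × ℝ => q.2 ^ 2) _ p := (hasFDerivAt_snd (𝕜 := ℝ) (E := ℝ) (F := ℝ) (p := p)).pow 2
    change fderiv ℝ (fun q : ℝ × ℝ => q.2 ^ 2) p w = _
    simp [this.fderiv]
  · have : HasFDerivAt (fun q => Gb b q 2) _ p :=
      ((hasFDerivAt_snd (p := p)).pow 3).mul hbd.hasFDerivAt
    simp [this.fderiv]
    ring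

theorem Gb_pv {b : ℝ × ℝ → ℝ} (hb : ContDiff ℝ (⊤ : ℕ∞) b) (p : ℝ × ℝ) :
    pv (Gb b) p = p.2 • rG b p := by
  rw [pv, Gb_fderiv hb]
  ext i; fin_cases i
  · simp [rG]
  · simp [rG]; ring
  · simp [rG, pv]; ring

theorem rG_pv {b : ℝ × ℝ → ℝ} (hb : ContDiff ℝ (⊤ : ℕ∞) b) (p : ℝ × ℝ) (h : p.2 = 0) :
    pv (rG b) p = ![0, 0, 3 * b p] := by
  have hd := (rG_smooth hb).differentiable (by simp) p
  have hbd := hb.differentiable (by simp) p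
  have hbd2 := (smooth_pv hb).differentiable (by simp) p
  ext i
  rw [← pv_comp_apply hd]
  fin_cases i
  · simp [rG, pv]
  · simp [rG, pv]
  · have : HasFDerivAt (fun q => rG b q 2) _ p :=
      (((hasFDerivAt_snd (p := p)).const_mul 3).mul hbd.hasFDerivAt).add
      (((hasFDerivAt_snd (p := p)).pow 2).mul hbd2.hasFDerivAt)
    simp [this.fderiv, pv, h]
    ring

theorem two_le_top : (2 : WithTop ℕ∞) ≤ ((⊤ : ℕ∞) : WithTop ℕ∞) :=
  WithTop.coe_le_coe.2 (le_top : (2 : ℕ∞) ≤ ⊤)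

theorem transport1 (C ν x : ℝ × ℝ → R3) (σ V1 V2 μ b : ℝ × ℝ → ℝ)
    (hC : ContDiff ℝ (⊤ : ℕ∞) C) (hx : ContDiff ℝ (⊤ : ℕ∞) x) (hν : ContDiff ℝ (⊤ : ℕ∞) ν)
    (hV2 : ContDiff ℝ (⊤ : ℕ∞) V2)
    (hb : ContDiff ℝ (⊤ : ℕ∞) b)
    (hV : ∀ p, V1 p • pu C p + V2 p • pv C p = σ p • ν p)
    (hxC : ∀ p, dot3 (x p) (pu C p) = 0) (hxν : ∀ p, dot3 (x p) (ν p) = 0)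
    (hVx : ∀ p, dot3 (V1 p • pu x p + V2 p • pv x p) (ν p) = p.2 * μ p)
    (hV20 : V2 0 ≠ 0)
    (hdet : det3 (pu C 0) (ν 0) (x 0) ≠ 0)
    (φ : ℝ × ℝ → ℝ × ℝ) (Ψ : R3 → R3) (hφ : ContDiffAt ℝ (⊤ : ℕ∞) φ 0) (hφ0 : φ 0 = 0)
    (hΨ : ContDiffAt ℝ (⊤ : ℕ∞) Ψ (Gb b 0))
    (hinj : ∀ᶠ p in nhds (0 : ℝ × ℝ), ∀ w, fderiv ℝ φ p w = 0 → w = 0)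
    (hch : ∀ᶠ p in nhds (0 : ℝ × ℝ), ∀ w, fderiv ℝ Ψ (Gb b p) (fderiv ℝ (Gb b) p w) =
      fderiv ℝ C (φ p) (fderiv ℝ φ p w)) :
    ∀ᶠ p in nhds (0 : ℝ × ℝ), p.2 = 0 → σ (φ p) = 0 ∧ (pv φ p).2 ≠ 0 ∧
      dot3 (x (φ p)) (fderiv ℝ Ψ (Gb b p) ![0, 1, 0]) = 0 ∧
      2 * (pv φ p).2 * det3 (pu C (φ p)) (fderiv ℝ Ψ (Gb b p) ![0, 1, 0]) (x (φ p)) * μ (φ p) * (φ p).2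
      + 3 * V2 (φ p) * dot3 (x (φ p)) (fderiv ℝ Ψ (Gb b p) ![0, 0, 1]) *
        det3 (pu C (φ p)) (ν (φ p)) (x (φ p)) * b p = 0 := by
  have hGs := Gb_smooth hb
  have hGd := hGs.differentiable (by simp)
  have hCd := hC.differentiable (by simp)
  have hxd := hx.differentiable (by simp)
  have hφc : Tendsto φ (nhds 0) (nhds 0) := by
    have := hφ.continuousAt.tendsto; rwa [hφ0] at this
  have hφ2 : ∀ᶠ p in nhds (0 : ℝ × ℝ), ContDiffAt ℝ 2 φ p :=
    (hφ.of_le two_le_top).eventually (by simp)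
  have hΨ2 : ∀ᶠ p in nhds (0 : ℝ × ℝ), ContDiffAt ℝ 2 Ψ (Gb b p) :=
    (hGs.continuous.tendsto 0).eventually ((hΨ.of_le two_le_top).eventually (by simp))
  have hv2 : ∀ᶠ p in nhds (0 : ℝ × ℝ), V2 (φ p) ≠ 0 :=
    hφc.eventually (hV2.continuous.continuousAt.eventually_ne hV20)
  have hdet' : ∀ᶠ p in nhds (0 : ℝ × ℝ), det3 (pu C (φ p)) (ν (φ p)) (x (φ p)) ≠ 0 := by
    have hcont : Continuous (fun q => det3 (pu C q) (ν q) (x q)) := by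
      have c1 := continuous_pi_iff.1 (smooth_pu hC).continuous
      have c2 := continuous_pi_iff.1 hν.continuous
      have c3 := continuous_pi_iff.1 hx.continuous
      simp only [det3]
      fun_prop
    exact hφc.eventually (hcont.continuousAt.eventually_ne hdet)
  have hxCv : ∀ q, V2 q ≠ 0 → dot3 (x q) (pv C q) = 0 := by
    intro q hq
    have h1 := hV q
    have h2 : dot3 (x q) (V1 q • pu C q + V2 q • pv C q) = dot3 (x q) (σ q • ν q) := by rw [h1]
    have h3 := hxC q
    have h4 := hxν q
    apply mul_left_cancel₀ hq
    simp only [dot3, Pi.add_apply, Pi.smul_apply, smul_eq_mul] at *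
    linear_combination h2 - V1 q * h3 + σ q * h4
  have hxC' : ∀ q, V2 q ≠ 0 → ∀ w, dot3 (x q) (fderiv ℝ C q w) = 0 := by
    intro q hq w
    rw [fderiv_eq_pupv]
    have h3 := hxC q
    have h4 := hxCv q hq
    simp only [dot3, Pi.add_apply, Pi.smul_apply, smul_eq_mul] at *
    linear_combination w.1 * h3 + w.2 * h4
  -- λ(r) = 0
  let T : ℝ × ℝ → (R3 →L[ℝ] R3) := fun p => fderiv ℝ Ψ (Gb b p)
  have hTd : ∀ᶠ p in nhds (0 : ℝ × ℝ), DifferentiableAt ℝ (fderiv ℝ Ψ) (Gb b p) := by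
    filter_upwards [hΨ2] with p hp
    exact (hp.fderiv_right (m := 1) (by norm_num)).differentiableAt (by simp)
  let g : ℝ × ℝ → ℝ := fun p => dot3 (x (φ p)) (T p (rG b p))
  have hPd : ∀ᶠ p in nhds (0 : ℝ × ℝ), DifferentiableAt ℝ (fun p => x (φ p)) p := by
    filter_upwards [hφ2] with p hp
    exact (hxd (φ p)).comp p (hp.differentiableAt (by simp))
  have hTd' : ∀ᶠ p in nhds (0 : ℝ × ℝ), DifferentiableAt ℝ T p := by
    filter_upwards [hTd] with p hp
    exact hp.comp p (hGd p)
  have hrd := (rG_smooth hb).differentiable (by simp)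
  have hg0 : ∀ᶠ p in nhds (0 : ℝ × ℝ), p.2 ≠ 0 → g p = 0 := by
    filter_upwards [hch, hv2] with p h1 h2 h3
    have h4 := h1 (0, 1)
    have h5 : fderiv ℝ (Gb b) p (0, 1) = p.2 • rG b p := Gb_pv hb p
    rw [h5, map_smul] at h4
    have h6 := hxC' _ h2 (fderiv ℝ φ p (0, 1))
    rw [← h4] at h6
    apply mul_left_cancel₀ h3
    simp only [g, T, dot3, Pi.smul_apply, smul_eq_mul] at h6 ⊢
    linear_combination h6
  have hg : ∀ᶠ p in nhds (0 : ℝ × ℝ), g p = 0 := by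
    filter_upwards [hg0.eventually_nhds, hPd, hTd'] with p h1 h2 h3
    refine eq_of_dense (F := g) (G := fun _ => 0) (p := p) ?_ continuousAt_const h1
    have h4 : DifferentiableAt ℝ (fun p => T p (rG b p)) p := h3.clm_apply (hrd p)
    obtain ⟨L, h5, -⟩ := HasFDerivAt.dot3' h2.hasFDerivAt h4.hasFDerivAt
    exact h5.continuousAt
  filter_upwards [hg.eventually_nhds, hPd, hTd', hTd, hφ2, hv2, hdet', hinj, hch, hg] with
    p k1 k2 k3 k4 k5 k6 k7 k8 k9 k10 hp0
  have hr0 : rG b p = (2 : ℝ) • (![0, 1, 0] : R3) := by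
    ext i; fin_cases i <;> simp [rG, hp0]
  have hGv : pv (Gb b) p = 0 := by rw [Gb_pv hb, hp0, zero_smul]
  have hlam : dot3 (x (φ p)) (fderiv ℝ Ψ (Gb b p) ![0, 1, 0]) = 0 := by
    simp only [g, T] at k10
    rw [hr0, map_smul] at k10
    simp only [dot3, Pi.smul_apply, smul_eq_mul] at k10 ⊢
    linear_combination (1 / 2 : ℝ) * k10
  -- derivative
  have hder : dot3 (fderiv ℝ x (φ p) (pv φ p)) (T p (rG b p)) +
      dot3 (x (φ p)) (T p ![0, 0, 3 * b p]) = 0 := by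
    have e1 : fderiv ℝ g p (0, 1) = 0 := by
      have : g =ᶠ[nhds p] fun _ => 0 := k1
      rw [this.fderiv_eq]; simp
    have h4 : DifferentiableAt ℝ (fun p => T p (rG b p)) p := k3.clm_apply (hrd p)
    have e2 := fderiv_dot3 k2 h4 (0, 1)
    have e3 : fderiv ℝ (fun p => x (φ p)) p (0, 1) = fderiv ℝ x (φ p) (pv φ p) := by
      have : HasFDerivAt (fun p => x (φ p)) _ p :=
        (hxd (φ p)).hasFDerivAt.comp p (k5.differentiableAt (by simp)).hasFDerivAt
      rw [this.fderiv]; rfl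
    have e4 : fderiv ℝ (fun p => T p (rG b p)) p (0, 1) = T p ![0, 0, 3 * b p] := by
      rw [fderiv_clm_apply k3 (hrd p)]
      have e5 : fderiv ℝ T p (0, 1) = 0 := by
        have : HasFDerivAt T _ p := k4.hasFDerivAt.comp p (hGd p).hasFDerivAt
        rw [this.fderiv]
        change fderiv ℝ (fderiv ℝ Ψ) (Gb b p) (pv (Gb b) p) = 0
        rw [hGv, map_zero]
      have e6 : fderiv ℝ (rG b) p (0, 1) = ![0, 0, 3 * b p] := rG_pv hb p hp0
      simp [e5, e6]
    rw [e3, e4] at e2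
    rw [← e2]
    exact e1
  -- kernel
  have hker : fderiv ℝ C (φ p) (pv φ p) = 0 := by
    have := k9 (0, 1)
    change fderiv ℝ Ψ (Gb b p) (pv (Gb b) p) = _ at this
    rw [hGv, map_zero] at this
    exact this.symm
  rw [fderiv_eq_pupv] at hker
  have hVq := hV (φ p)
  obtain ⟨i1, i2⟩ := det3_indep (a := pu C (φ p)) (n := ν (φ p)) (x := x (φ p))
    (α := (pv φ p).1 * V2 (φ p) - (pv φ p).2 * V1 (φ p)) (β := (pv φ p).2 * σ (φ p)) (by
      have e1 : V2 (φ p) • ((pv φ p).1 • pu C (φ p) + (pv φ p).2 • pv C (φ p)) = 0 := by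
        rw [hker, smul_zero]
      have e2 : (pv φ p).2 • (V1 (φ p) • pu C (φ p) + V2 (φ p) • pv C (φ p)) =
        (pv φ p).2 • σ (φ p) • ν (φ p) := by rw [hVq]
      rw [mul_smul, ← e2, ← e1]
      module) k7
  have hφv : (pv φ p).2 ≠ 0 := by
    intro h
    rw [h] at i1
    have h1 : (pv φ p).1 = 0 := by simpa [k6] using i1
    have h2 : pv φ p = 0 := Prod.ext h1 h
    have := k8 (0, 1) h2
    simp at this
  have hσ : σ (φ p) = 0 := (mul_eq_zero.1 i2).resolve_left hφv
  refine ⟨hσ, hφv, hlam, ?_⟩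
  -- ⟨Vx, C_u⟩ = 0
  have hz : dot3 (V1 (φ p) • pu x (φ p) + V2 (φ p) • pv x (φ p)) (pu C (φ p)) = 0 := by
    have hCu := (smooth_pu hC).differentiable (by simp) (φ p)
    have hCv := (smooth_pv hC).differentiable (by simp) (φ p)
    have j1 : pv (fun q => dot3 (x q) (pu C q)) (φ p) = 0 := by
      have : (fun q => dot3 (x q) (pu C q)) = fun _ => 0 := funext hxC
      rw [this]; simp [pv]
    have j2 : pu (fun q => dot3 (x q) (pv C q)) (φ p) = 0 := by
      have : (fun q => dot3 (x q) (pv C q)) =ᶠ[nhds (φ p)] fun _ => 0 := by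
        filter_upwards [hV2.continuous.continuousAt.eventually_ne k6] with q hq using hxCv q hq
      simp only [pu]
      rw [this.fderiv_eq]; simp
    rw [pv_dot3 (hxd _) hCu] at j1
    rw [pu_dot3 (hxd _) hCv, pupv_comm hC] at j2
    have j3 : dot3 (pu x (φ p)) (V1 (φ p) • pu C (φ p) + V2 (φ p) • pv C (φ p)) = 0 := by
      rw [hVq, hσ]; simp [dot3]
    simp only [dot3, Pi.add_apply, Pi.smul_apply, smul_eq_mul] at *
    linear_combination j3 + V2 (φ p) * j1 - V2 (φ p) * j2
  have hcr := cramer1 hlam (hxC (φ p)) (hxν (φ p)) hz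
  rw [hVx] at hcr
  rw [fderiv_eq_pupv, hr0, map_smul, show (![0, 0, 3 * b p] : R3) = (3 * b p) • ![0, 0, 1] by
    ext i; fin_cases i <;> simp, map_smul] at hder
  change dot3 _ ((2 : ℝ) • fderiv ℝ Ψ (Gb b p) ![0, 1, 0]) +
    dot3 _ ((3 * b p) • fderiv ℝ Ψ (Gb b p) ![0, 0, 1]) = 0 at hder
  generalize fderiv ℝ Ψ (Gb b p) ![0, 1, 0] = w at *
  generalize fderiv ℝ Ψ (Gb b p) ![0, 0, 1] = t at *
  generalize det3 (pu C (φ p)) (ν (φ p)) (x (φ p)) = d1 at *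
  generalize det3 (pu C (φ p)) w (x (φ p)) = d2 at *
  have i1' : (pv φ p).1 * V2 (φ p) = (pv φ p).2 * V1 (φ p) := by linarith
  simp only [dot3, Pi.add_apply, Pi.smul_apply, smul_eq_mul] at hder hcr ⊢
  linear_combination (d1 * V2 (φ p)) * hder - 2 * (pv φ p).2 * hcr -
    (d1 * 2 * (pu x (φ p) 0 * w 0 + pu x (φ p) 1 * w 1 + pu x (φ p) 2 * w 2)) * i1'


theorem fderiv_inj_of_leftInv {E F : Type*} [NormedAddCommGroup E] [NormedSpace ℝ E]
    [NormedAddCommGroup F] [NormedSpace ℝ F] {f : E → F} {g : F → E} {p : E}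
    (hf : DifferentiableAt ℝ f p) (hg : DifferentiableAt ℝ g (f p))
    (h : ∀ᶠ x in nhds p, g (f x) = x) (w : E) (hw : fderiv ℝ f p w = 0) : w = 0 := by
  have h1 : HasFDerivAt (fun x => g (f x)) _ p := hg.hasFDerivAt.comp p hf.hasFDerivAt
  have h2 : HasFDerivAt (fun x => g (f x)) (ContinuousLinearMap.id ℝ E) p :=
    (hasFDerivAt_id p).congr_of_eventuallyEq h
  have h3 := DFunLike.congr_fun (h1.unique h2) w
  rw [ContinuousLinearMap.comp_apply, hw, map_zero] at h3
  exact h3.symm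

theorem cont_det3 {a b c : ℝ × ℝ → R3} {p : ℝ × ℝ} (ha : ∀ i, ContinuousAt (fun q => a q i) p)
    (hb : ∀ i, ContinuousAt (fun q => b q i) p) (hc : ∀ i, ContinuousAt (fun q => c q i) p) :
    ContinuousAt (fun q => det3 (a q) (b q) (c q)) p := by
  have a0 := ha 0
  have a1 := ha 1
  have a2 := ha 2
  have b0 := hb 0
  have b1 := hb 1
  have b2 := hb 2
  have c0 := hc 0
  have c1 := hc 1
  have c2 := hc 2
  simp only [det3]
  fun_prop

theorem cont_dot3 {a b : ℝ × ℝ → R3} {p : ℝ × ℝ} (ha : ∀ i, ContinuousAt (fun q => a q i) p)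
    (hb : ∀ i, ContinuousAt (fun q => b q i) p) :
    ContinuousAt (fun q => dot3 (a q) (b q)) p := by
  have a0 := ha 0
  have a1 := ha 1
  have a2 := ha 2
  have b0 := hb 0
  have b1 := hb 1
  have b2 := hb 2
  simp only [dot3]
  fun_prop

theorem transport (C ν x : ℝ × ℝ → R3) (σ V1 V2 μ b : ℝ × ℝ → ℝ)
    (hC : ContDiff ℝ (⊤ : ℕ∞) C) (hx : ContDiff ℝ (⊤ : ℕ∞) x) (hν : ContDiff ℝ (⊤ : ℕ∞) ν)
    (hσ : ContDiff ℝ (⊤ : ℕ∞) σ)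
    (hV2 : ContDiff ℝ (⊤ : ℕ∞) V2) (hμ : Continuous μ)
    (hb : ContDiff ℝ (⊤ : ℕ∞) b)
    (hV : ∀ p, V1 p • pu C p + V2 p • pv C p = σ p • ν p)
    (hxC : ∀ p, dot3 (x p) (pu C p) = 0) (hxν : ∀ p, dot3 (x p) (ν p) = 0)
    (hVx : ∀ p, dot3 (V1 p • pu x p + V2 p • pv x p) (ν p) = p.2 * μ p)
    (hV20 : V2 0 ≠ 0) (hV10 : V1 0 = 0) (hσ0 : σ 0 = 0) (hσv : pv σ 0 ≠ 0) (hμ0 : μ 0 ≠ 0)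
    (hdet : det3 (pu C 0) (ν 0) (x 0) ≠ 0)
    (hAE : AEquivAt C 0 (Gb b) 0) :
    b 0 = 0 ∧ (pu b 0 ≠ 0 ↔ pu σ 0 ≠ 0) := by
  obtain ⟨φ, Φ, ⟨hφ, φi, hφi, hφl, hφr⟩, hφ0, ⟨hΦ, Ψ, hΨ, hΨl, hΨr⟩, hE⟩ := hAE
  have hGs := Gb_smooth hb
  have hGd := hGs.differentiable (by simp)
  have hCd := hC.differentiable (by simp)
  have hG0 : Φ (C 0) = Gb b 0 := by
    have := hE.self_of_nhds; rwa [hφ0] at this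
  rw [hG0] at hΨ hΨr
  have hφc : Tendsto φ (nhds 0) (nhds 0) := by
    have := hφ.continuousAt.tendsto; rwa [hφ0] at this
  have hφd : ∀ᶠ p in nhds (0 : ℝ × ℝ), DifferentiableAt ℝ φ p :=
    ((hφ.of_le two_le_top).eventually (by simp)).mono fun p hp => hp.differentiableAt (by simp)
  have hφid : ∀ᶠ p in nhds (0 : ℝ × ℝ), DifferentiableAt ℝ φi (φ p) :=
    hφ.continuousAt.eventually
      (((hφi.of_le two_le_top).eventually (by simp)).mono fun p hp => hp.differentiableAt (by simp))
  have hΨd : ∀ᶠ p in nhds (0 : ℝ × ℝ), DifferentiableAt ℝ Ψ (Gb b p) :=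
    (hGs.continuous.tendsto 0).eventually
      (((hΨ.of_le two_le_top).eventually (by simp)).mono fun p hp => hp.differentiableAt (by simp))
  have hinj : ∀ᶠ p in nhds (0 : ℝ × ℝ), ∀ w, fderiv ℝ φ p w = 0 → w = 0 := by
    filter_upwards [hφl.eventually_nhds, hφd, hφid] with p h1 h2 h3
    exact fderiv_inj_of_leftInv h2 h3 h1
  have hCG : ∀ᶠ p in nhds (0 : ℝ × ℝ), C (φ p) = Ψ (Gb b p) := by
    have : Tendsto (fun p => C (φ p)) (nhds 0) (nhds (C 0)) := (hC.continuous.tendsto 0).comp hφc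
    filter_upwards [this.eventually hΨl, hE] with p h1 h2
    rw [← h2, h1]
  have hch : ∀ᶠ p in nhds (0 : ℝ × ℝ), ∀ w, fderiv ℝ Ψ (Gb b p) (fderiv ℝ (Gb b) p w) =
      fderiv ℝ C (φ p) (fderiv ℝ φ p w) := by
    filter_upwards [hCG.eventually_nhds, hφd, hΨd] with p h1 h2 h3 w
    have e1 : HasFDerivAt (fun p => C (φ p)) _ p := (hCd (φ p)).hasFDerivAt.comp p h2.hasFDerivAt
    have e2 : HasFDerivAt (fun p => Ψ (Gb b p)) _ p := h3.hasFDerivAt.comp p (hGd p).hasFDerivAt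
    exact DFunLike.congr_fun (e2.unique (e1.congr_of_eventuallyEq
      (h1.mono fun _ h => h.symm))) w
  have hTinj : ∀ w, fderiv ℝ Ψ (Gb b 0) w = 0 → w = 0 := by
    have e : Ψ (Gb b 0) = C 0 := by
      have := hΨl.self_of_nhds
      rwa [hG0] at this
    refine fderiv_inj_of_leftInv hΨd.self_of_nhds ?_ hΨr
    rw [e]
    exact hΦ.differentiableAt (by simp)
  have hmain := transport1 C ν x σ V1 V2 μ b hC hx hν hV2 hb hV hxC hxν hVx hV20 hdet φ Ψ hφ hφ0 hΨ
    hinj hch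
  have hdT := det3_ne_of_inj _ hTinj
  have hCv : pv C 0 = 0 := by
    have := hV 0
    rw [hV10, hσ0] at this
    simpa [hV20] using this
  obtain ⟨-, hφv, hw, -⟩ := hmain.self_of_nhds rfl
  rw [hφ0] at hw
  -- T e1
  have ht1 : fderiv ℝ Ψ (Gb b 0) ![1, 0, 0] = (pu φ 0).1 • pu C 0 := by
    have h1 := hch.self_of_nhds (1, 0)
    rw [Gb_fderiv hb, hφ0, fderiv_eq_pupv C, hCv] at h1
    simp at h1
    exact h1
  have hx1 : dot3 (x 0) (fderiv ℝ Ψ (Gb b 0) ![1, 0, 0]) = 0 := by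
    rw [ht1]
    have := hxC 0
    simp only [dot3, Pi.smul_apply, smul_eq_mul] at this ⊢
    linear_combination (pu φ 0).1 * this
  have hxx : dot3 (x 0) (x 0) ≠ 0 := by
    intro h
    have e : ∀ i, x 0 i = 0 := by
      simp only [dot3] at h
      have a0 := mul_self_nonneg (x 0 0)
      have a1 := mul_self_nonneg (x 0 1)
      have a2 := mul_self_nonneg (x 0 2)
      intro i; fin_cases i
      · exact mul_self_eq_zero.1 (by change x 0 0 * x 0 0 = 0; linarith)
      · exact mul_self_eq_zero.1 (by change x 0 1 * x 0 1 = 0; linarith)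
      · exact mul_self_eq_zero.1 (by change x 0 2 * x 0 2 = 0; linarith)
    apply hdet
    simp [det3, e]
  have hcr := cramer2 (c := fderiv ℝ Ψ (Gb b 0) ![0, 0, 1]) hx1 hw
  have hne := mul_ne_zero hxx hdT
  rw [hcr, ht1] at hne
  have hdd : det3 ((pu φ 0).1 • pu C 0) (fderiv ℝ Ψ (Gb b 0) ![0, 1, 0]) (x 0) =
      (pu φ 0).1 * det3 (pu C 0) (fderiv ℝ Ψ (Gb b 0) ![0, 1, 0]) (x 0) := by
    simp only [det3, Pi.smul_apply, smul_eq_mul]; ring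
  rw [hdd] at hne
  have n1 : (pu φ 0).1 ≠ 0 := left_ne_zero_of_mul (left_ne_zero_of_mul hne)
  have n2 : det3 (pu C 0) (fderiv ℝ Ψ (Gb b 0) ![0, 1, 0]) (x 0) ≠ 0 :=
    right_ne_zero_of_mul (left_ne_zero_of_mul hne)
  have n3 : dot3 (x 0) (fderiv ℝ Ψ (Gb b 0) ![0, 0, 1]) ≠ 0 := right_ne_zero_of_mul hne
  -- restrict to the axis
  have hax : Tendsto (fun u : ℝ => (u, (0 : ℝ))) (nhds 0) (nhds (0 : ℝ × ℝ)) := by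
    have : Continuous (fun u : ℝ => (u, (0 : ℝ))) := by fun_prop
    exact this.tendsto 0
  let P : ℝ × ℝ → ℝ := fun p => 2 * (pv φ p).2 *
    det3 (pu C (φ p)) (fderiv ℝ Ψ (Gb b p) ![0, 1, 0]) (x (φ p)) * μ (φ p)
  let Q : ℝ × ℝ → ℝ := fun p => 3 * V2 (φ p) * dot3 (x (φ p)) (fderiv ℝ Ψ (Gb b p) ![0, 0, 1]) *
        det3 (pu C (φ p)) (ν (φ p)) (x (φ p))
  have hTc : ∀ w, ContinuousAt (fun p => fderiv ℝ Ψ (Gb b p) w) 0 := by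
    intro w
    have h1 : ContinuousAt (fderiv ℝ Ψ) (Gb b 0) :=
      ((hΨ.of_le two_le_top).fderiv_right (m := 1) (by norm_num)).continuousAt
    have h2 : ContinuousAt (fun p => fderiv ℝ Ψ (Gb b p)) 0 :=
      ContinuousAt.comp (f := Gb b) h1 hGs.continuous.continuousAt
    exact h2.clm_apply continuousAt_const
  have hcomp : ∀ {E : Type} [TopologicalSpace E] {F : ℝ × ℝ → E}, Continuous F →
      ContinuousAt (fun p => F (φ p)) 0 := by
    intro E _ F hF
    exact ContinuousAt.comp (g := F) hF.continuousAt hφ.continuousAt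
  have c1 := fun i => continuousAt_pi.1 (hcomp (smooth_pu hC).continuous) i
  have c2 := fun i => continuousAt_pi.1 (hcomp hν.continuous) i
  have c3 := fun i => continuousAt_pi.1 (hcomp hx.continuous) i
  have c4 := fun i => continuousAt_pi.1 (hTc ![0, 1, 0]) i
  have c5 := fun i => continuousAt_pi.1 (hTc ![0, 0, 1]) i
  have c6 := hcomp hμ
  have c7 := hcomp hV2.continuous
  have c8 : ContinuousAt (fun p => (pv φ p).2) 0 := by
    have h1 : ContinuousAt (fderiv ℝ φ) 0 :=
      ((hφ.of_le two_le_top).fderiv_right (m := 1) (by norm_num)).continuousAt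
    exact continuousAt_snd.comp (h1.clm_apply continuousAt_const)
  have hPc : ContinuousAt P 0 := by
    exact ((continuousAt_const.mul c8).mul (cont_det3 c1 c4 c3)).mul c6
  have hQc : ContinuousAt Q 0 := by
    exact ((continuousAt_const.mul c7).mul (cont_dot3 c3 c5)).mul (cont_det3 c1 c2 c3)
  have hP0 : P 0 ≠ 0 := by
    simp only [P, hφ0]
    exact mul_ne_zero (mul_ne_zero (mul_ne_zero two_ne_zero hφv) n2) hμ0
  have hQ0 : Q 0 ≠ 0 := by
    simp only [Q, hφ0]
    exact mul_ne_zero (mul_ne_zero (mul_ne_zero three_ne_zero hV20) n3) hdet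
  let m : ℝ → ℝ := fun u => - (P (u, 0) / Q (u, 0))
  have hmc : ContinuousAt m 0 := by
    have hax' : ContinuousAt (fun u : ℝ => (u, (0 : ℝ))) 0 := hax
    have a1 : ContinuousAt (fun u : ℝ => P (u, 0)) 0 :=
      ContinuousAt.comp (g := P) (f := fun u : ℝ => (u, (0 : ℝ))) hPc hax'
    have a2 : ContinuousAt (fun u : ℝ => Q (u, 0)) 0 :=
      ContinuousAt.comp (g := Q) (f := fun u : ℝ => (u, (0 : ℝ))) hQc hax'
    exact (a1.div a2 hQ0).neg
  have hm0 : m 0 ≠ 0 := neg_ne_zero.2 (div_ne_zero hP0 hQ0)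
  have hbm : ∀ᶠ u in nhds (0 : ℝ), b (u, 0) = m u * (φ (u, 0)).2 := by
    filter_upwards [hax.eventually hmain, hax.eventually (hQc.eventually_ne hQ0)] with u h1 h2
    obtain ⟨-, -, -, h3⟩ := h1 rfl
    change P (u, 0) * (φ (u, 0)).2 + Q (u, 0) * b (u, 0) = 0 at h3
    simp only [m]
    field_simp
    linarith
  have hσφ : ∀ᶠ u in nhds (0 : ℝ), σ (φ (u, 0)) = 0 := by
    filter_upwards [hax.eventually hmain] with u h1 using (h1 rfl).1
  have hline : HasDerivAt (fun u : ℝ => (u, (0 : ℝ))) ((1, 0) : ℝ × ℝ) 0 :=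
    (hasDerivAt_id (0:ℝ)).prodMk (hasDerivAt_const 0 0)
  have hφline : HasDerivAt (fun u : ℝ => φ (u, 0)) (pu φ 0) 0 :=
    HasFDerivAt.comp_hasDerivAt (l := φ) (f := fun u : ℝ => (u, (0 : ℝ))) (0:ℝ) hφd.self_of_nhds.hasFDerivAt hline
  have hφ2 : HasDerivAt (fun u : ℝ => (φ (u, 0)).2) (pu φ 0).2 0 := hφline.snd
  have hφ20 : (φ (0, 0)).2 = 0 := by
    change (φ 0).2 = 0
    rw [hφ0]; rfl
  have hbline : HasDerivAt (fun u : ℝ => b (u, 0)) (pu b 0) 0 :=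
    HasFDerivAt.comp_hasDerivAt (l := b) (f := fun u : ℝ => (u, (0 : ℝ))) (0:ℝ)
      (hb.differentiable (by simp) 0).hasFDerivAt hline
  have hb' := (hasDerivAt_mul_of_zero hmc hφ2 hφ20).congr_of_eventuallyEq hbm
  have e1 : pu b 0 = m 0 * (pu φ 0).2 := hbline.unique hb'
  have hσline : HasDerivAt (fun u : ℝ => σ (φ (u, 0))) (fderiv ℝ σ (φ 0) (pu φ 0)) 0 :=
    HasFDerivAt.comp_hasDerivAt (l := σ) (f := fun u : ℝ => φ (u, 0)) (0:ℝ)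
      (hσ.differentiable (by simp) (φ 0)).hasFDerivAt hφline
  have e2 : fderiv ℝ σ (φ 0) (pu φ 0) = 0 :=
    hσline.unique ((hasDerivAt_const (0:ℝ) (0:ℝ)).congr_of_eventuallyEq hσφ)
  rw [hφ0, fderiv_eq_pupv] at e2
  simp only [smul_eq_mul] at e2
  refine ⟨?_, ?_⟩
  · have := hbm.self_of_nhds
    rw [hφ20, mul_zero] at this
    exact this
  · rw [e1]
    constructor
    · intro h h'
      rw [h'] at e2
      apply h
      have : (pu φ 0).2 = 0 := by
        have : (pu φ 0).2 * pv σ 0 = 0 := by linarith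
        exact (mul_eq_zero.1 this).resolve_right hσv
      rw [this, mul_zero]
    · intro h h'
      have h2 : (pu φ 0).2 = 0 := (mul_eq_zero.1 h').resolve_left hm0
      rw [h2] at e2
      have : (pu φ 0).1 * pu σ 0 = 0 := by linarith
      exact h ((mul_eq_zero.1 this).resolve_left n1)


theorem dot3_smul_left' (c : ℝ) (a b : R3) : dot3 (c • a) b = c * dot3 a b := by
  simp only [dot3, Pi.smul_apply, smul_eq_mul]; ring

theorem dot3_smul_right' (c : ℝ) (a b : R3) : dot3 a (c • b) = c * dot3 a b := by
  simp only [dot3, Pi.smul_apply, smul_eq_mul]; ring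

theorem dot3_add_left' (a b c : R3) : dot3 (a + b) c = dot3 a c + dot3 b c := by
  simp only [dot3, Pi.add_apply]; ring

theorem dot3_add_right' (a b c : R3) : dot3 c (a + b) = dot3 c a + dot3 c b := by
  simp only [dot3, Pi.add_apply]; ring

theorem dot3_comm' (a b : R3) : dot3 a b = dot3 b a := by
  simp only [dot3]; ring

theorem eq_zero_of_dots {a b c w : R3} (hd : det3 a b c ≠ 0) (h1 : dot3 w a = 0)
    (h2 : dot3 w b = 0) (h3 : dot3 w c = 0) : w = 0 := by
  have k0 : w 0 * det3 a b c = 0 := by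
    have : w 0 * det3 a b c = dot3 w a * (b 1 * c 2 - b 2 * c 1) +
        dot3 w b * (c 1 * a 2 - c 2 * a 1) + dot3 w c * (a 1 * b 2 - a 2 * b 1) := by
      simp only [dot3, det3]; ring
    rw [this, h1, h2, h3]; ring
  have k1 : w 1 * det3 a b c = 0 := by
    have : w 1 * det3 a b c = dot3 w a * (b 2 * c 0 - b 0 * c 2) +
        dot3 w b * (c 2 * a 0 - c 0 * a 2) + dot3 w c * (a 2 * b 0 - a 0 * b 2) := by
      simp only [dot3, det3]; ring
    rw [this, h1, h2, h3]; ring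
  have k2 : w 2 * det3 a b c = 0 := by
    have : w 2 * det3 a b c = dot3 w a * (b 0 * c 1 - b 1 * c 0) +
        dot3 w b * (c 0 * a 1 - c 1 * a 0) + dot3 w c * (a 0 * b 1 - a 1 * b 0) := by
      simp only [dot3, det3]; ring
    rw [this, h1, h2, h3]; ring
  have e0 := (mul_eq_zero.1 k0).resolve_right hd
  have e1 := (mul_eq_zero.1 k1).resolve_right hd
  have e2 := (mul_eq_zero.1 k2).resolve_right hd
  funext i
  fin_cases i
  · exact e0
  · exact e1
  · exact e2

theorem gram_det3 (a n x b m y : R3) : det3 a n x * det3 b m y =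
    dot3 a b * (dot3 n m * dot3 x y - dot3 n y * dot3 x m) -
    dot3 a m * (dot3 n b * dot3 x y - dot3 n y * dot3 x b) +
    dot3 a y * (dot3 n b * dot3 x m - dot3 n m * dot3 x b) := by
  simp only [dot3, det3]; ring

theorem pu_snd_smul {F : ℝ × ℝ → R3} (hF : ContDiff ℝ (⊤ : ℕ∞) F) (p : ℝ × ℝ) :
    pu (fun q : ℝ × ℝ => q.2 • F q) p = p.2 • pu F p := by
  have h1 : HasFDerivAt (fun q : ℝ × ℝ => q.2 • F q) _ p :=
    (hasFDerivAt_snd (𝕜 := ℝ) (p := p)).smul (hF.differentiable (by simp) p).hasFDerivAt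
  simp only [pu]
  rw [h1.fderiv]
  simp

section
variable {f ν h ν₁ : ℝ × ℝ → R3} (H : AdaptedPureFrontal f ν h ν₁)
include H

theorem pv_pu_f (p : ℝ × ℝ) : pv (pu f) p = p.2 • pu h p := by
  rw [← pupv_comm H.smooth_f, ← pu_snd_smul H.smooth_h]
  congr 1
  funext q
  exact H.fv_eq q

theorem pv_pu_ν (p : ℝ × ℝ) : pv (pu ν) p = p.2 • pu ν₁ p := by
  rw [← pupv_comm H.smooth_ν, ← pu_snd_smul H.smooth_ν₁]
  congr 1
  funext q
  exact H.νv_eq q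

theorem dot_h_ν (p : ℝ × ℝ) : dot3 (h p) (ν p) = 0 := by
  refine eq_of_dense (F := fun p => dot3 (h p) (ν p)) (G := fun _ => 0) (p := p)
    (H.smooth_h.dot3' H.smooth_ν).continuous.continuousAt continuousAt_const
    (Eventually.of_forall fun y hy => ?_)
  have := H.orth_fv_ν y
  rw [H.fv_eq, dot3_smul_left'] at this
  exact (mul_eq_zero.1 this).resolve_left hy

theorem dot_ν_u (p : ℝ × ℝ) : dot3 (pu ν p) (ν p) = 0 := by
  have hd := H.smooth_ν.differentiable (by simp) p
  have h1 := pu_dot3 hd hd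
  have h2 : (fun p => dot3 (ν p) (ν p)) = fun _ => 1 := funext H.unit_ν
  rw [h2] at h1
  simp only [pu, fderiv_const_apply, zero_apply] at h1
  rw [dot3_comm' (ν p)] at h1
  simp only [pu]
  linarith

theorem dot_ν_v (p : ℝ × ℝ) : dot3 (pv ν p) (ν p) = 0 := by
  have hd := H.smooth_ν.differentiable (by simp) p
  have h1 := pv_dot3 hd hd
  have h2 : (fun p => dot3 (ν p) (ν p)) = fun _ => 1 := funext H.unit_ν
  rw [h2] at h1
  simp only [pv, fderiv_const_apply, zero_apply] at h1
  rw [dot3_comm' (ν p)] at h1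
  simp only [pv]
  linarith

theorem dot_ν₁ (p : ℝ × ℝ) : dot3 (ν₁ p) (ν p) = 0 := by
  refine eq_of_dense (F := fun p => dot3 (ν₁ p) (ν p)) (G := fun _ => 0) (p := p)
    (H.smooth_ν₁.dot3' H.smooth_ν).continuous.continuousAt continuousAt_const
    (Eventually.of_forall fun y hy => ?_)
  have := dot_ν_v H y
  rw [H.νv_eq, dot3_smul_left'] at this
  exact (mul_eq_zero.1 this).resolve_left hy

theorem dot_hu_ν (p : ℝ × ℝ) : dot3 (pu h p) (ν p) = Mt h ν p := by
  have h1 := pu_dot3 (H.smooth_h.differentiable (by simp) p) (H.smooth_ν.differentiable (by simp) p)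
  have h2 : (fun p => dot3 (h p) (ν p)) = fun _ => 0 := funext (dot_h_ν H)
  rw [h2] at h1
  have h3 : pu (fun _ : ℝ × ℝ => (0 : ℝ)) p = 0 := by simp [pu]
  rw [h3] at h1
  simp only [Mt]
  linarith

theorem smooth_Mt : ContDiff ℝ (⊤ : ℕ∞) (Mt h ν) :=
  (H.smooth_h.dot3' (smooth_pu H.smooth_ν)).neg

theorem smooth_Lt : ContDiff ℝ (⊤ : ℕ∞) (Lt f ν) :=
  ((smooth_pu H.smooth_f).dot3' (smooth_pu H.smooth_ν)).neg

theorem smooth_Nt1 : ContDiff ℝ (⊤ : ℕ∞) (Nt1 h ν₁) :=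
  (H.smooth_h.dot3' H.smooth_ν₁).neg

theorem smooth_Et : ContDiff ℝ (⊤ : ℕ∞) (Et f) :=
  (smooth_pu H.smooth_f).dot3' (smooth_pu H.smooth_f)

theorem smooth_Ft : ContDiff ℝ (⊤ : ℕ∞) (Ft f h) :=
  (smooth_pu H.smooth_f).dot3' H.smooth_h

theorem smooth_Gt : ContDiff ℝ (⊤ : ℕ∞) (Gt h) :=
  H.smooth_h.dot3' H.smooth_h

theorem dot_fu_ν₁ (p : ℝ × ℝ) : dot3 (pu f p) (ν₁ p) = - Mt h ν p := by
  refine eq_of_dense (F := fun p => dot3 (pu f p) (ν₁ p)) (G := fun p => - Mt h ν p) (p := p)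
    ((smooth_pu H.smooth_f).dot3' H.smooth_ν₁).continuous.continuousAt
    (smooth_Mt H).neg.continuous.continuousAt
    (Eventually.of_forall fun y hy => ?_)
  have h1 := pv_dot3 ((smooth_pu H.smooth_f).differentiable (by simp) y)
    (H.smooth_ν.differentiable (by simp) y)
  have h2 : (fun p => dot3 (pu f p) (ν p)) = fun _ => 0 := funext H.orth_fu_ν
  have h3 : pv (fun _ : ℝ × ℝ => (0 : ℝ)) y = 0 := by simp [pv]
  rw [h2, h3, pv_pu_f H, H.νv_eq, dot3_smul_left', dot3_smul_right', dot_hu_ν H] at h1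
  have : y.2 * (dot3 (pu f y) (ν₁ y) + Mt h ν y) = 0 := by linarith
  have := (mul_eq_zero.1 this).resolve_left hy
  linarith

theorem gram_ne (p : ℝ × ℝ) : Et f p * Gt h p - Ft f h p ^ 2 ≠ 0 := by
  have hd := det3_of_li (H.indep p)
  have h1 := gram_det3 (pu f p) (h p) (ν p) (pu f p) (h p) (ν p)
  rw [H.orth_fu_ν, dot_h_ν H, H.unit_ν, dot3_comm' (h p) (pu f p)] at h1
  intro h0
  apply mul_ne_zero hd hd
  rw [h1]
  simp only [Et, Gt, Ft] at h0
  linear_combination h0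

variable {ε : ℝ} (hHK : ∀ p : ℝ × ℝ, Hm f ν h ν₁ p ^ 2 - Kg f ν h ν₁ p > 0)

theorem smooth_Kg : ContDiff ℝ (⊤ : ℕ∞) (Kg f ν h ν₁) :=
  (((smooth_Lt H).mul (smooth_Nt1 H)).sub ((smooth_Mt H).pow 2)).div
    (((smooth_Et H).mul (smooth_Gt H)).sub ((smooth_Ft H).pow 2)) (gram_ne H)

theorem smooth_Hm : ContDiff ℝ (⊤ : ℕ∞) (Hm f ν h ν₁) :=
  ((((smooth_Et H).mul (smooth_Nt1 H)).sub ((contDiff_const.mul (smooth_Ft H)).mul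
    (smooth_Mt H))).add ((smooth_Gt H).mul (smooth_Lt H))).div
    (contDiff_const.mul (((smooth_Et H).mul (smooth_Gt H)).sub ((smooth_Ft H).pow 2)))
    (fun p => mul_ne_zero two_ne_zero (gram_ne H p))

include hHK

theorem smooth_kap : ContDiff ℝ (⊤ : ℕ∞) (kap f ν h ν₁ ε) :=
  (smooth_Hm H).add (contDiff_const.mul
    ((((smooth_Hm H).pow 2).sub (smooth_Kg H)).sqrt (fun p => (hHK p).ne')))

variable (hε : ε = 1 ∨ ε = -1)
include hε

theorem char_eq (p : ℝ × ℝ) : (Lt f ν p - kap f ν h ν₁ ε p * Et f p) *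
    (Nt1 h ν₁ p - kap f ν h ν₁ ε p * Gt h p) =
    (Mt h ν p - kap f ν h ν₁ ε p * Ft f h p) ^ 2 := by
  have hs := Real.sq_sqrt (hHK p).le
  have hk : kap f ν h ν₁ ε p = Hm f ν h ν₁ p +
    ε * Real.sqrt (Hm f ν h ν₁ p ^ 2 - Kg f ν h ν₁ p) := rfl
  have he : ε ^ 2 = 1 := by rcases hε with h | h <;> rw [h] <;> norm_num
  set s := Real.sqrt (Hm f ν h ν₁ p ^ 2 - Kg f ν h ν₁ p)
  have hD := gram_ne H p
  have hH : Hm f ν h ν₁ p * (2 * (Et f p * Gt h p - Ft f h p ^ 2)) =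
      (Et f p * Nt1 h ν₁ p - 2 * Ft f h p * Mt h ν p + Gt h p * Lt f ν p) := by
    simp only [Hm]; field_simp
  have hK : Kg f ν h ν₁ p * (Et f p * Gt h p - Ft f h p ^ 2) =
      Lt f ν p * Nt1 h ν₁ p - Mt h ν p ^ 2 := by
    simp only [Kg]; field_simp
  set k := kap f ν h ν₁ ε p
  have h2 : k ^ 2 - 2 * Hm f ν h ν₁ p * k + Kg f ν h ν₁ p = 0 := by
    rw [hk]; linear_combination s ^ 2 * he + hs
  linear_combination (Et f p * Gt h p - Ft f h p ^ 2) * h2 - hK + k * hH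

theorem rodrigues (p : ℝ × ℝ) : (-(Mt h ν p - kap f ν h ν₁ ε p * Ft f h p)) • pu ν p +
    (Lt f ν p - kap f ν h ν₁ ε p * Et f p) • ν₁ p = - kap f ν h ν₁ ε p • xj f ν h ν₁ ε p := by
  have hc := char_eq H hHK hε p
  rw [neg_smul (kap f ν h ν₁ ε p), ← sub_eq_zero, sub_neg_eq_add]
  refine eq_zero_of_dots (det3_of_li (H.indep p)) ?_ ?_ ?_
  · simp only [xj, dot3_add_left', dot3_smul_left']
    rw [dot3_comm' (pu ν p), dot3_comm' (ν₁ p), dot3_comm' (h p), dot_fu_ν₁ H]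
    simp only [Lt, Et, Ft]
    ring
  · simp only [xj, dot3_add_left', dot3_smul_left']
    rw [dot3_comm' (pu ν p), dot3_comm' (ν₁ p)]
    have e1 : dot3 (h p) (pu ν p) = - Mt h ν p := by simp [Mt]
    have e2 : dot3 (h p) (ν₁ p) = - Nt1 h ν₁ p := by simp [Nt1]
    have e3 : dot3 (pu f p) (h p) = Ft f h p := rfl
    have e4 : dot3 (h p) (h p) = Gt h p := rfl
    rw [e1, e2, e3, e4]
    linear_combination -hc
  · simp only [xj, dot3_add_left', dot3_smul_left']
    rw [dot_ν_u H, dot_ν₁ H, H.orth_fu_ν, dot_h_ν H]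
    ring

end


theorem fderiv_sm {a : ℝ × ℝ → ℝ} {F : ℝ × ℝ → R3} {p : ℝ × ℝ} (ha : DifferentiableAt ℝ a p)
    (hF : DifferentiableAt ℝ F p) (w : ℝ × ℝ) :
    fderiv ℝ (fun q => a q • F q) p w = a p • fderiv ℝ F p w + fderiv ℝ a p w • F p := by
  have h1 : HasFDerivAt (fun q => a q • F q) _ p := ha.hasFDerivAt.smul hF.hasFDerivAt
  rw [h1.fderiv]
  simp

theorem fderiv_ml {a b : ℝ × ℝ → ℝ} {p : ℝ × ℝ} (ha : DifferentiableAt ℝ a p)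
    (hb : DifferentiableAt ℝ b p) (w : ℝ × ℝ) :
    fderiv ℝ (fun q => a q * b q) p w = a p * fderiv ℝ b p w + fderiv ℝ a p w * b p := by
  have h1 : HasFDerivAt (fun q => a q * b q) _ p := ha.hasFDerivAt.mul hb.hasFDerivAt
  rw [h1.fderiv]
  simp
  ring

theorem fderiv_iv {a : ℝ × ℝ → ℝ} {p : ℝ × ℝ} (ha : DifferentiableAt ℝ a p) (h0 : a p ≠ 0)
    (w : ℝ × ℝ) :
    fderiv ℝ (fun q => (a q)⁻¹) p w = - (a p ^ 2)⁻¹ * fderiv ℝ a p w := by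
  have h1 : HasFDerivAt (fun q => (a q)⁻¹) _ p :=
    (hasDerivAt_inv h0).comp_hasFDerivAt p ha.hasFDerivAt
  rw [h1.fderiv]
  simp

section
variable {f ν h ν₁ : ℝ × ℝ → R3} (H : AdaptedPureFrontal f ν h ν₁)
  {ε : ℝ} (hHK : ∀ p : ℝ × ℝ, Hm f ν h ν₁ p ^ 2 - Kg f ν h ν₁ p > 0)
include H hHK

theorem smooth_V1c : ContDiff ℝ (⊤ : ℕ∞) (V1c f ν h ν₁ ε) :=
  (contDiff_snd.mul ((smooth_Mt H).sub ((smooth_kap H hHK).mul (smooth_Ft H)))).neg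

theorem smooth_V2c : ContDiff ℝ (⊤ : ℕ∞) (V2c f ν h ν₁ ε) :=
  (smooth_Lt H).sub ((smooth_kap H hHK).mul (smooth_Et H))

theorem smooth_VD {g : ℝ × ℝ → ℝ} (hg : ContDiff ℝ (⊤ : ℕ∞) g) :
    ContDiff ℝ (⊤ : ℕ∞) (VD f ν h ν₁ ε g) :=
  ((smooth_V1c H hHK).smul (smooth_pu hg)).add ((smooth_V2c H hHK).smul (smooth_pv hg))

theorem smooth_xj : ContDiff ℝ (⊤ : ℕ∞) (xj f ν h ν₁ ε) :=
  (((smooth_Mt H).sub ((smooth_kap H hHK).mul (smooth_Ft H))).neg.smul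
    (smooth_pu H.smooth_f)).add
  (((smooth_Lt H).sub ((smooth_kap H hHK).mul (smooth_Et H))).smul H.smooth_h)

variable (hκ : ∀ p : ℝ × ℝ, kap f ν h ν₁ ε p ≠ 0)
include hκ

theorem smooth_rho : ContDiff ℝ (⊤ : ℕ∞) (rho f ν h ν₁ ε) :=
  (smooth_kap H hHK).inv hκ

theorem smooth_Cf : ContDiff ℝ (⊤ : ℕ∞) (Cf f ν h ν₁ ε) :=
  H.smooth_f.add ((smooth_rho H hHK hκ).smul H.smooth_ν)

theorem fderiv_Cf (p w : ℝ × ℝ) : fderiv ℝ (Cf f ν h ν₁ ε) p w =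
    fderiv ℝ f p w + (rho f ν h ν₁ ε p • fderiv ℝ ν p w + fderiv ℝ (rho f ν h ν₁ ε) p w • ν p) := by
  have h1 := (smooth_rho H hHK hκ).differentiable (by simp) p
  have h2 := H.smooth_ν.differentiable (by simp) p
  have h3 := H.smooth_f.differentiable (by simp) p
  rw [← fderiv_sm h1 h2]
  have : HasFDerivAt (Cf f ν h ν₁ ε) _ p := h3.hasFDerivAt.add (h1.smul h2).hasFDerivAt
  rw [this.fderiv]
  rfl

theorem VD_rho (p : ℝ × ℝ) : VD f ν h ν₁ ε (rho f ν h ν₁ ε) p =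
    - (kap f ν h ν₁ ε p ^ 2)⁻¹ * VD f ν h ν₁ ε (kap f ν h ν₁ ε) p := by
  have h1 := fun w => fderiv_iv ((smooth_kap H hHK (ε := ε)).differentiable (by simp) p) (hκ p) w
  have e : (fun q => (kap f ν h ν₁ ε q)⁻¹) = rho f ν h ν₁ ε := rfl
  rw [e] at h1
  simp only [VD, pu, pv, h1, smul_eq_mul]
  ring

theorem VD_sigma (hW : VD f ν h ν₁ ε (kap f ν h ν₁ ε) 0 = 0) (w : ℝ × ℝ) :
    fderiv ℝ (VD f ν h ν₁ ε (rho f ν h ν₁ ε)) 0 w =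
    - (kap f ν h ν₁ ε 0 ^ 2)⁻¹ * fderiv ℝ (VD f ν h ν₁ ε (kap f ν h ν₁ ε)) 0 w := by
  have e : VD f ν h ν₁ ε (rho f ν h ν₁ ε) =
    fun p => - (kap f ν h ν₁ ε p ^ 2)⁻¹ * VD f ν h ν₁ ε (kap f ν h ν₁ ε) p :=
    funext (VD_rho H hHK hκ)
  have hk := smooth_kap H hHK (ε := ε)
  have h1 : ContDiff ℝ (⊤ : ℕ∞) (fun p => - (kap f ν h ν₁ ε p ^ 2)⁻¹) :=
    ((hk.pow 2).inv (fun p => pow_ne_zero 2 (hκ p))).neg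
  rw [e, fderiv_ml (h1.differentiable (by simp) 0)
    ((smooth_VD H hHK hk).differentiable (by simp) 0), hW]
  ring

variable (hε : ε = 1 ∨ ε = -1)
include hε

theorem VD_ν (p : ℝ × ℝ) : V1c f ν h ν₁ ε p • pu ν p + V2c f ν h ν₁ ε p • pv ν p =
    (- (p.2 * kap f ν h ν₁ ε p)) • xj f ν h ν₁ ε p := by
  have := rodrigues H hHK hε p
  have h2 := congrArg (fun z => p.2 • z) this
  simp only [smul_add, smul_smul] at h2
  rw [H.νv_eq, smul_smul]
  simp only [V1c, V2c]
  rw [show -(p.2 * kap f ν h ν₁ ε p) = p.2 * -kap f ν h ν₁ ε p by ring, ← h2]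
  congr 2
  · ring
  · ring

theorem VC_eq (p : ℝ × ℝ) : V1c f ν h ν₁ ε p • pu (Cf f ν h ν₁ ε) p +
    V2c f ν h ν₁ ε p • pv (Cf f ν h ν₁ ε) p = VD f ν h ν₁ ε (rho f ν h ν₁ ε) p • ν p := by
  have h1 := VD_ν H hHK hκ hε p
  have e1 : pu (Cf f ν h ν₁ ε) p = pu f p + (rho f ν h ν₁ ε p • pu ν p +
    pu (rho f ν h ν₁ ε) p • ν p) := fderiv_Cf H hHK hκ p _
  have e2 : pv (Cf f ν h ν₁ ε) p = pv f p + (rho f ν h ν₁ ε p • pv ν p +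
    pv (rho f ν h ν₁ ε) p • ν p) := fderiv_Cf H hHK hκ p _
  have hr : rho f ν h ν₁ ε p * kap f ν h ν₁ ε p = 1 := inv_mul_cancel₀ (hκ p)
  rw [e1, e2, H.fv_eq]
  funext i
  have h2 := congrFun h1 i
  simp only [VD, V1c, V2c, xj, Pi.add_apply, Pi.smul_apply, smul_eq_mul] at h2 ⊢
  linear_combination rho f ν h ν₁ ε p * h2 -
    p.2 * (-(Mt h ν p - kap f ν h ν₁ ε p * Ft f h p) * pu f p i +
          (Lt f ν p - kap f ν h ν₁ ε p * Et f p) * h p i) * hr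

omit hε in
omit hκ hHK in
theorem x_ν (p : ℝ × ℝ) : dot3 (xj f ν h ν₁ ε p) (ν p) = 0 := by
  simp only [xj, dot3_add_left', dot3_smul_left']
  rw [H.orth_fu_ν, dot_h_ν H]
  ring

omit hε in
theorem x_C (p : ℝ × ℝ) : dot3 (xj f ν h ν₁ ε p) (pu (Cf f ν h ν₁ ε) p) = 0 := by
  have e1 : pu (Cf f ν h ν₁ ε) p = pu f p + (rho f ν h ν₁ ε p • pu ν p +
    pu (rho f ν h ν₁ ε) p • ν p) := fderiv_Cf H hHK hκ p _
  have hr : rho f ν h ν₁ ε p * kap f ν h ν₁ ε p = 1 := inv_mul_cancel₀ (hκ p)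
  rw [e1]
  simp only [dot3_add_right', dot3_smul_right', x_ν H]
  simp only [xj, dot3_add_left', dot3_smul_left']
  rw [dot3_comm' (h p) (pu f p)]
  have e1 : dot3 (h p) (pu ν p) = - Mt h ν p := by simp [Mt]
  have e2 : dot3 (pu f p) (pu ν p) = - Lt f ν p := by simp [Lt]
  have e3 : dot3 (pu f p) (h p) = Ft f h p := rfl
  have e4 : dot3 (pu f p) (pu f p) = Et f p := rfl
  rw [e1, e2, e3, e4]
  linear_combination (- Ft f h p * Lt f ν p + Et f p * Mt h ν p) * hr

theorem Vx_ν (p : ℝ × ℝ) : dot3 (V1c f ν h ν₁ ε p • pu (xj f ν h ν₁ ε) p +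
    V2c f ν h ν₁ ε p • pv (xj f ν h ν₁ ε) p) (ν p) =
    p.2 * (kap f ν h ν₁ ε p * dot3 (xj f ν h ν₁ ε p) (xj f ν h ν₁ ε p)) := by
  have hx := (smooth_xj H hHK (ε := ε)).differentiable (by simp) p
  have hn := H.smooth_ν.differentiable (by simp) p
  have h1 := pu_dot3 hx hn
  have h2 := pv_dot3 hx hn
  have h3 : (fun p => dot3 (xj f ν h ν₁ ε p) (ν p)) = fun _ => 0 := funext (x_ν H)
  have h4 : pu (fun _ : ℝ × ℝ => (0 : ℝ)) p = 0 := by simp [pu]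
  have h5 : pv (fun _ : ℝ × ℝ => (0 : ℝ)) p = 0 := by simp [pv]
  rw [h3, h4] at h1
  rw [h3, h5] at h2
  have h6 := congrArg (dot3 (xj f ν h ν₁ ε p)) (VD_ν H hHK hκ hε p)
  simp only [dot3_add_left', dot3_smul_left', dot3_add_right', dot3_smul_right'] at h6 ⊢
  linear_combination -V1c f ν h ν₁ ε p * h1 - V2c f ν h ν₁ ε p * h2 - h6
end


section
variable {f ν h ν₁ : ℝ × ℝ → R3} (H : AdaptedPureFrontal f ν h ν₁)
include H

theorem nuu_axis (u : ℝ) : pu ν (u, 0) + (Lt f ν (u, 0) • pu f (u, 0) +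
    Mt h ν (u, 0) • h (u, 0)) = 0 := by
  have a1 := H.adapted_fu u
  have a2 := H.adapted_h u
  have a3 := H.adapted_fu_h u
  refine eq_zero_of_dots (det3_of_li (H.indep (u, 0))) ?_ ?_ ?_
  · simp only [dot3_add_left', dot3_smul_left']
    rw [a1, dot3_comm' (h (u, 0)), a3, dot3_comm' (pu ν (u, 0))]
    simp only [Lt]; ring
  · simp only [dot3_add_left', dot3_smul_left']
    rw [a2, a3, dot3_comm' (pu ν (u, 0))]
    simp only [Mt]; ring
  · simp only [dot3_add_left', dot3_smul_left']
    rw [dot_ν_u H, H.orth_fu_ν, dot_h_ν H]; ring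

theorem Etv (u : ℝ) : pv (Et f) (u, 0) = 0 := by
  have hd := (smooth_pu H.smooth_f).differentiable (by simp) (u, 0)
  have := pv_dot3 hd hd
  rw [pv_pu_f H] at this
  simp only [zero_smul] at this
  change pv (Et f) (u, 0) = _ at this
  rw [this]; simp [dot3]

theorem fderiv_neg_fun {a : ℝ × ℝ → ℝ} (p : ℝ × ℝ) : pv (fun q => - a q) p = - pv a p := by
  simp only [pv]
  rw [fderiv_fun_neg]; rfl

theorem Ltv (u : ℝ) : pv (Lt f ν) (u, 0) = 0 := by
  have hd := (smooth_pu H.smooth_f).differentiable (by simp) (u, 0)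
  have hd2 := (smooth_pu H.smooth_ν).differentiable (by simp) (u, 0)
  have := pv_dot3 hd hd2
  rw [pv_pu_f H, pv_pu_ν H] at this
  simp only [zero_smul] at this
  have e : Lt f ν = fun p => - dot3 (pu f p) (pu ν p) := rfl
  rw [e, fderiv_neg_fun H, this]; simp [dot3]

theorem Ftv (u : ℝ) : pv (Ft f h) (u, 0) = dot3 (pu f (u, 0)) (pv h (u, 0)) := by
  have hd := (smooth_pu H.smooth_f).differentiable (by simp) (u, 0)
  have hd2 := H.smooth_h.differentiable (by simp) (u, 0)
  have := pv_dot3 hd hd2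
  rw [pv_pu_f H] at this
  simp only [zero_smul] at this
  change pv (Ft f h) (u, 0) = _ at this
  rw [this]; simp [dot3]

theorem Gtv (u : ℝ) : pv (Gt h) (u, 0) = 2 * dot3 (h (u, 0)) (pv h (u, 0)) := by
  have hd2 := H.smooth_h.differentiable (by simp) (u, 0)
  have := pv_dot3 hd2 hd2
  change pv (Gt h) (u, 0) = _ at this
  rw [this, dot3_comm' (pv h (u, 0))]; ring

theorem Mtv (u : ℝ) : pv (Mt h ν) (u, 0) = Lt f ν (u, 0) * pv (Ft f h) (u, 0) +
    Mt h ν (u, 0) * pv (Gt h) (u, 0) / 2 := by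
  have hd := H.smooth_h.differentiable (by simp) (u, 0)
  have hd2 := (smooth_pu H.smooth_ν).differentiable (by simp) (u, 0)
  have := pv_dot3 hd hd2
  rw [pv_pu_ν H] at this
  simp only [zero_smul] at this
  have e : Mt h ν = fun p => - dot3 (h p) (pu ν p) := rfl
  have h1 := congrArg (fun z => dot3 z (pv h (u, 0))) (nuu_axis H u)
  simp only [dot3_add_left', dot3_smul_left'] at h1
  have e0 : dot3 (h (u, 0)) (0 : R3) = 0 := by simp [dot3]
  have e00 : dot3 (0 : R3) (pv h (u, 0)) = 0 := by simp [dot3]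
  rw [e0] at this
  rw [e00] at h1
  have e3 : pv (Mt h ν) (u, 0) = - dot3 (pv h (u, 0)) (pu ν (u, 0)) := by
    rw [e, fderiv_neg_fun H, this]; ring
  rw [e3, Ftv H, Gtv H, dot3_comm' (pv h (u, 0))]
  linear_combination -h1

variable {ε : ℝ} (hHK : ∀ p : ℝ × ℝ, Hm f ν h ν₁ p ^ 2 - Kg f ν h ν₁ p > 0)
  (hε : ε = 1 ∨ ε = -1)
include hHK hε

theorem char_axis (u : ℝ) : (Lt f ν (u, 0) - kap f ν h ν₁ ε (u, 0)) *
    (Nt1 h ν₁ (u, 0) - kap f ν h ν₁ ε (u, 0)) = Mt h ν (u, 0) ^ 2 := by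
  have := char_eq H hHK hε (u, 0)
  have a1 : Et f (u, 0) = 1 := H.adapted_fu u
  have a2 : Gt h (u, 0) = 1 := H.adapted_h u
  have a3 : Ft f h (u, 0) = 0 := H.adapted_fu_h u
  rw [a1, a2, a3] at this
  linear_combination this

omit hHK hε in
theorem kap_sum (u : ℝ) : kap f ν h ν₁ (-ε) (u, 0) =
    Nt1 h ν₁ (u, 0) + Lt f ν (u, 0) - kap f ν h ν₁ ε (u, 0) := by
  have a1 : Et f (u, 0) = 1 := H.adapted_fu u
  have a2 : Gt h (u, 0) = 1 := H.adapted_h u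
  have a3 : Ft f h (u, 0) = 0 := H.adapted_fu_h u
  have : Hm f ν h ν₁ (u, 0) = (Nt1 h ν₁ (u, 0) + Lt f ν (u, 0)) / 2 := by
    simp only [Hm, a1, a2, a3]; ring
  simp only [kap]
  linear_combination 2 * this

omit H in
theorem kap_ne (p : ℝ × ℝ) : kap f ν h ν₁ (-ε) p - kap f ν h ν₁ ε p ≠ 0 := by
  have h1 := Real.sqrt_pos.2 (hHK p)
  simp only [kap]
  rcases hε with h | h <;> rw [h] <;> intro h' <;> linarith

theorem kapv (u : ℝ) : pv (kap f ν h ν₁ ε) (u, 0) *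
    (kap f ν h ν₁ (-ε) (u, 0) - kap f ν h ν₁ ε (u, 0)) =
    (Lt f ν (u, 0) - kap f ν h ν₁ ε (u, 0)) * rc f ν h ν₁ u / 24 := by
  have hk := (smooth_kap H hHK (ε := ε)).differentiable (by simp) (u, 0)
  have hL := (smooth_Lt H).differentiable (by simp) (u, 0)
  have hM := (smooth_Mt H).differentiable (by simp) (u, 0)
  have hN := (smooth_Nt1 H).differentiable (by simp) (u, 0)
  have hE := (smooth_Et H).differentiable (by simp) (u, 0)
  have hF := (smooth_Ft H).differentiable (by simp) (u, 0)
  have hG := (smooth_Gt H).differentiable (by simp) (u, 0)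
  have d1 := (hL.hasFDerivAt.sub (hk.hasFDerivAt.mul hE.hasFDerivAt)).mul
    (hN.hasFDerivAt.sub (hk.hasFDerivAt.mul hG.hasFDerivAt))
  have d2 := (hM.hasFDerivAt.sub (hk.hasFDerivAt.mul hF.hasFDerivAt)).pow 2
  have e := d1.unique (d2.congr_of_eventuallyEq (Eventually.of_forall fun p => char_eq H hHK hε p))
  have e' := DFunLike.congr_fun e (0, 1)
  have a1 : Et f (u, 0) = 1 := H.adapted_fu u
  have a2 : Gt h (u, 0) = 1 := H.adapted_h u
  have a3 : Ft f h (u, 0) = 0 := H.adapted_fu_h u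
  simp [a1, a2, a3] at e'
  have b1 := Etv H u
  have b2 := Ltv H u
  have b3 := Mtv H u
  have b4 := char_axis H hHK hε u
  have b5 := kap_sum H (ε := ε) u
  simp only [pv] at b1 b2 b3
  rw [b1, b2, b3] at e'
  rw [b5]
  simp only [rc, pv]
  linear_combination -e' + fderiv ℝ (Gt h) (u, 0) (0, 1) * b4

theorem Lk_ne (hkt : kt h ν 0 ≠ 0) : Lt f ν (0, 0) - kap f ν h ν₁ ε (0, 0) ≠ 0 := by
  intro h0
  have := char_axis H hHK hε 0
  rw [h0, zero_mul] at this
  exact pow_ne_zero 2 hkt this.symm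

theorem second_cond (hκ : ∀ p : ℝ × ℝ, kap f ν h ν₁ ε p ≠ 0) (hkt : kt h ν 0 ≠ 0) :
    pu (rho f ν h ν₁ ε) 0 *
            ((kt h ν 0) ^ 2 * deriv (kν f ν) 0 +
              2 * kt h ν 0 * deriv (kt h ν) 0 * (kap f ν h ν₁ ε 0 - kν f ν 0) +
              (deriv (rb h ν₁) 0 / 3) * (kap f ν h ν₁ ε 0 - kν f ν 0) ^ 2) ≠
          ((kt h ν 0) ^ 2 + (kap f ν h ν₁ ε 0 - kν f ν 0) ^ 2) *
            (kap f ν h ν₁ (-ε) 0 - kap f ν h ν₁ ε 0) *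
            (kν f ν 0 - kap f ν h ν₁ ε 0) := by
  have hline : HasDerivAt (fun u : ℝ => (u, (0 : ℝ))) ((1, 0) : ℝ × ℝ) 0 :=
    (hasDerivAt_id (0:ℝ)).prodMk (hasDerivAt_const 0 0)
  have key : ∀ {g : ℝ × ℝ → ℝ}, ContDiff ℝ (⊤ : ℕ∞) g →
      HasDerivAt (fun u : ℝ => g (u, 0)) (pu g 0) 0 := fun {g} hg =>
    HasFDerivAt.comp_hasDerivAt (l := g) (f := fun u : ℝ => (u, (0 : ℝ))) (0:ℝ)
      (hg.differentiable (by simp) 0).hasFDerivAt hline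
  have dL := key (smooth_Lt H)
  have dM := key (smooth_Mt H)
  have dN := key (smooth_Nt1 H)
  have dk := key (smooth_kap H hHK (ε := ε))
  have e1 : deriv (kν f ν) 0 = pu (Lt f ν) 0 := dL.deriv
  have e2 : deriv (kt h ν) 0 = pu (Mt h ν) 0 := dM.deriv
  have e3 : deriv (rb h ν₁) 0 = 3 * pu (Nt1 h ν₁) 0 := (dN.const_mul 3).deriv
  have e4 : pu (rho f ν h ν₁ ε) 0 = - (kap f ν h ν₁ ε 0 ^ 2)⁻¹ * pu (kap f ν h ν₁ ε) 0 :=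
    fderiv_iv ((smooth_kap H hHK (ε := ε)).differentiable (by simp) 0) (hκ 0) _
  have d1 := (dL.sub dk).mul (dN.sub dk)
  have d2 := dM.pow 2
  have e := d1.unique (d2.congr_of_eventuallyEq
    (Eventually.of_forall fun u => char_axis H hHK hε u))
  simp at e
  have c := char_axis H hHK hε 0
  have s := kap_sum H (ε := ε) 0
  have n1 := kap_ne hHK hε (ν₁ := ν₁) 0
  have n2 := Lk_ne H hHK hε hkt
  have hk0 := hκ 0
  rw [e1, e2, e3, e4]
  have z : ((0 : ℝ), (0 : ℝ)) = 0 := rfl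
  simp only [kν, kt, z] at hkt c s n1 n2 e ⊢
  set k := kap f ν h ν₁ ε 0
  set k2 := kap f ν h ν₁ (-ε) 0
  set l := Lt f ν 0
  set m := Mt h ν 0
  set n := Nt1 h ν₁ 0
  set k' := pu (kap f ν h ν₁ ε) 0
  intro hh
  have hB : m ^ 2 * pu (Lt f ν) 0 + 2 * m * pu (Mt h ν) 0 * (k - l) +
      3 * pu (Nt1 h ν₁) 0 / 3 * (k - l) ^ 2 = k' * ((k2 - k) * (l - k)) := by
    rw [s]
    linear_combination (l - k) * e - pu (Lt f ν) 0 * c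
  rw [hB] at hh
  have hA := mul_ne_zero n1 n2
  have h3 : (m ^ 2 + (k - l) ^ 2 + (k⁻¹ * k') ^ 2) * ((k2 - k) * (l - k)) = 0 := by
    rw [mul_pow, inv_pow]
    linear_combination -hh
  have h4 := (mul_eq_zero.1 h3).resolve_right hA
  have := sq_nonneg (k - l)
  have := sq_nonneg (k⁻¹ * k')
  have := pow_pos (abs_pos.2 hkt) 2
  rw [sq_abs] at this
  linarith
end


section
variable {f ν h ν₁ : ℝ × ℝ → R3} (H : AdaptedPureFrontal f ν h ν₁)
  {ε : ℝ} (hHK : ∀ p : ℝ × ℝ, Hm f ν h ν₁ p ^ 2 - Kg f ν h ν₁ p > 0)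
  (hε : ε = 1 ∨ ε = -1)
  (hκ : ∀ p : ℝ × ℝ, kap f ν h ν₁ ε p ≠ 0) (hkt : kt h ν 0 ≠ 0)
include H hHK hε hκ hkt

theorem det_frame : det3 (pu (Cf f ν h ν₁ ε) 0) (ν 0) (xj f ν h ν₁ ε 0) ≠ 0 := by
  have e1 : pu (Cf f ν h ν₁ ε) 0 = pu f 0 + (rho f ν h ν₁ ε 0 • pu ν 0 +
    pu (rho f ν h ν₁ ε) 0 • ν 0) := fderiv_Cf H hHK hκ 0 _
  have g := gram_det3 (pu (Cf f ν h ν₁ ε) 0) (ν 0) (xj f ν h ν₁ ε 0) (pu f 0) (ν 0) (h 0)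
  have hr : rho f ν h ν₁ ε 0 * kap f ν h ν₁ ε 0 = 1 := inv_mul_cancel₀ (hκ 0)
  have a1 : dot3 (pu f 0) (pu f 0) = 1 := H.adapted_fu 0
  have a2 : dot3 (h 0) (h 0) = 1 := H.adapted_h 0
  have a3 : dot3 (pu f 0) (h 0) = 0 := H.adapted_fu_h 0
  have a4 : dot3 (ν 0) (pu f 0) = 0 := by rw [dot3_comm']; exact H.orth_fu_ν 0
  have a5 : dot3 (ν 0) (h 0) = 0 := by rw [dot3_comm']; exact dot_h_ν H 0
  have b1 : dot3 (pu (Cf f ν h ν₁ ε) 0) (pu f 0) = 1 - rho f ν h ν₁ ε 0 * Lt f ν 0 := by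
    rw [e1]
    simp only [dot3_add_left', dot3_smul_left', a1, a4]
    rw [dot3_comm' (pu ν 0)]; simp only [Lt]; ring
  have b2 : dot3 (pu (Cf f ν h ν₁ ε) 0) (h 0) = - rho f ν h ν₁ ε 0 * Mt h ν 0 := by
    rw [e1]
    simp only [dot3_add_left', dot3_smul_left', a3, a5]
    rw [dot3_comm' (pu ν 0)]; simp only [Mt]; ring
  have a1' : Et f 0 = 1 := H.adapted_fu 0
  have a3' : Ft f h 0 = 0 := H.adapted_fu_h 0
  have b3 : dot3 (xj f ν h ν₁ ε 0) (pu f 0) = - Mt h ν 0 := by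
    simp only [xj, dot3_add_left', dot3_smul_left', a1, a1', a3']
    rw [dot3_comm' (h 0), a3]; ring
  have b4 : dot3 (xj f ν h ν₁ ε 0) (h 0) = Lt f ν 0 - kap f ν h ν₁ ε 0 := by
    simp only [xj, dot3_add_left', dot3_smul_left', a2, a1', a3, a3']
    ring
  rw [a4, a5, b1, b2, b3, b4, H.unit_ν] at g
  intro h0
  rw [h0, zero_mul] at g
  have hm : Mt h ν 0 ≠ 0 := hkt
  have hrn : rho f ν h ν₁ ε 0 ≠ 0 := inv_ne_zero (hκ 0)
  have : rho f ν h ν₁ ε 0 * ((Lt f ν 0 - kap f ν h ν₁ ε 0) ^ 2 + Mt h ν 0 ^ 2) = 0 := by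
    linear_combination g - (Lt f ν 0 - kap f ν h ν₁ ε 0) * hr
  have := (mul_eq_zero.1 this).resolve_left hrn
  have h1 := sq_nonneg (Lt f ν 0 - kap f ν h ν₁ ε 0)
  have h2 : 0 < Mt h ν 0 ^ 2 := by positivity
  linarith

theorem V20_ne : V2c f ν h ν₁ ε 0 ≠ 0 := by
  have a1' : Et f 0 = 1 := H.adapted_fu 0
  have := Lk_ne H hHK hε hkt
  simp only [V2c, a1', mul_one]
  exact this

theorem sigma_rc (hridge : VD f ν h ν₁ ε (kap f ν h ν₁ ε) 0 = 0) :
    pu (VD f ν h ν₁ ε (rho f ν h ν₁ ε)) 0 ≠ 0 ↔ deriv (rc f ν h ν₁) 0 ≠ 0 := by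
  have hk := smooth_kap H hHK (ε := ε)
  let ax : ℝ → ℝ × ℝ := fun u => (u, 0)
  have hax : ContDiff ℝ (⊤ : ℕ∞) ax := contDiff_id.prodMk contDiff_const
  let m : ℝ → ℝ := fun u => - (kap f ν h ν₁ ε (ax u) ^ 2)⁻¹ *
    ((Lt f ν (ax u) - kap f ν h ν₁ ε (ax u)) * ((Lt f ν (ax u) - kap f ν h ν₁ ε (ax u)) /
      (24 * (kap f ν h ν₁ (-ε) (ax u) - kap f ν h ν₁ ε (ax u)))))
  have hLc : Continuous (fun u => Lt f ν (ax u)) := (smooth_Lt H).continuous.comp hax.continuous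
  have hkc : Continuous (fun u => kap f ν h ν₁ ε (ax u)) := hk.continuous.comp hax.continuous
  have hk2c : Continuous (fun u => kap f ν h ν₁ (-ε) (ax u)) :=
    (smooth_kap H hHK (ε := -ε)).continuous.comp hax.continuous
  have hmc : Continuous m :=
    (((hkc.pow 2).inv₀ (fun u => pow_ne_zero 2 (hκ _))).neg).mul
      ((hLc.sub hkc).mul ((hLc.sub hkc).div (continuous_const.mul (hk2c.sub hkc))
        (fun u => mul_ne_zero (by norm_num) (kap_ne hHK hε _))))
  have hm0 : m 0 ≠ 0 := by
    have n2 := Lk_ne H hHK hε hkt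
    have n1 := kap_ne hHK hε (ν₁ := ν₁) (0, 0)
    exact mul_ne_zero (neg_ne_zero.2 (inv_ne_zero (pow_ne_zero 2 (hκ _))))
      (mul_ne_zero n2 (div_ne_zero n2 (mul_ne_zero (by norm_num) n1)))
  have hσm : ∀ u, VD f ν h ν₁ ε (rho f ν h ν₁ ε) (u, 0) = m u * rc f ν h ν₁ u := by
    intro u
    rw [VD_rho H hHK hκ]
    have a1 : Et f (u, 0) = 1 := H.adapted_fu u
    have n1 := kap_ne hHK hε (ν₁ := ν₁) (u, 0)
    have kv := kapv H hHK hε u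
    have : pv (kap f ν h ν₁ ε) (u, 0) = (Lt f ν (u, 0) - kap f ν h ν₁ ε (u, 0)) /
      (24 * (kap f ν h ν₁ (-ε) (u, 0) - kap f ν h ν₁ ε (u, 0))) * rc f ν h ν₁ u := by
      field_simp
      linear_combination 24 * kv
    simp only [VD, V1c, V2c, smul_eq_mul, this, a1, m, ax]
    ring
  have hrc : ContDiff ℝ (⊤ : ℕ∞) (rc f ν h ν₁) :=
    contDiff_const.mul ((((smooth_pv (smooth_Nt1 H)).comp hax).sub
      ((contDiff_const.mul ((smooth_pv (smooth_Ft H)).comp hax)).mul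
        ((smooth_Mt H).comp hax))).sub (((smooth_pv (smooth_Gt H)).comp hax).mul
        ((smooth_Nt1 H).comp hax)))
  have hrc0 : rc f ν h ν₁ 0 = 0 := by
    have h1 := hσm 0
    have h2 : VD f ν h ν₁ ε (rho f ν h ν₁ ε) 0 = 0 := by
      rw [VD_rho H hHK hκ, hridge, mul_zero]
    change VD f ν h ν₁ ε (rho f ν h ν₁ ε) 0 = _ at h1
    rw [h2] at h1
    exact (mul_eq_zero.1 h1.symm).resolve_left hm0
  have d1 := hasDerivAt_mul_of_zero hmc.continuousAt
    (hrc.differentiable (by simp) 0).hasDerivAt hrc0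
  have hline : HasDerivAt (fun u : ℝ => (u, (0 : ℝ))) ((1, 0) : ℝ × ℝ) 0 :=
    (hasDerivAt_id (0:ℝ)).prodMk (hasDerivAt_const 0 0)
  have d2 : HasDerivAt (fun u : ℝ => VD f ν h ν₁ ε (rho f ν h ν₁ ε) (u, 0))
      (pu (VD f ν h ν₁ ε (rho f ν h ν₁ ε)) 0) 0 :=
    HasFDerivAt.comp_hasDerivAt (l := VD f ν h ν₁ ε (rho f ν h ν₁ ε))
      (f := fun u : ℝ => (u, (0 : ℝ))) (0:ℝ)
      ((smooth_VD H hHK (smooth_rho H hHK hκ)).differentiable (by simp) 0).hasFDerivAt hline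
  have e : pu (VD f ν h ν₁ ε (rho f ν h ν₁ ε)) 0 = m 0 * deriv (rc f ν h ν₁) 0 :=
    d2.unique (d1.congr_of_eventuallyEq (Eventually.of_forall hσm))
  rw [e]
  simp [hm0]

theorem main_iff (hridge : VD f ν h ν₁ ε (kap f ν h ν₁ ε) 0 = 0)
    (hridge1 : VD f ν h ν₁ ε (VD f ν h ν₁ ε (kap f ν h ν₁ ε)) 0 ≠ 0) :
    AEquivAt (Cf f ν h ν₁ ε) 0 (fun x : ℝ × ℝ => ![x.1, x.2 ^ 2, x.1 * x.2 ^ 3]) 0 ↔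
      deriv (rc f ν h ν₁) 0 ≠ 0 := by
  rw [← sigma_rc H hHK hε hκ hkt hridge]
  have hk := smooth_kap H hHK (ε := ε)
  have hV20 := V20_ne H hHK hε hκ hkt
  have hV10 : V1c f ν h ν₁ ε 0 = 0 := by simp [V1c]
  have hσ := smooth_VD H hHK (ε := ε) (smooth_rho H hHK hκ)
  have hσ0 : VD f ν h ν₁ ε (rho f ν h ν₁ ε) 0 = 0 := by
    rw [VD_rho H hHK hκ, hridge, mul_zero]
  have hσv : pv (VD f ν h ν₁ ε (rho f ν h ν₁ ε)) 0 ≠ 0 := by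
    have h1 : V2c f ν h ν₁ ε 0 * pv (VD f ν h ν₁ ε (kap f ν h ν₁ ε)) 0 ≠ 0 := by
      intro h'
      apply hridge1
      rw [VD, hV10, zero_smul, zero_add]
      exact h'
    have h2 : pv (VD f ν h ν₁ ε (rho f ν h ν₁ ε)) 0 = - (kap f ν h ν₁ ε 0 ^ 2)⁻¹ *
      pv (VD f ν h ν₁ ε (kap f ν h ν₁ ε)) 0 := VD_sigma H hHK hκ hridge _
    rw [h2]
    exact mul_ne_zero (neg_ne_zero.2 (inv_ne_zero (pow_ne_zero 2 (hκ 0))))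
      (right_ne_zero_of_mul h1)
  have hdet := det_frame H hHK hε hκ hkt
  have hxx : dot3 (xj f ν h ν₁ ε 0) (xj f ν h ν₁ ε 0) ≠ 0 := by
    intro h0
    apply hdet
    have e0 : xj f ν h ν₁ ε 0 = 0 := by
      simp only [dot3] at h0
      have a0 := mul_self_nonneg (xj f ν h ν₁ ε 0 0)
      have a1 := mul_self_nonneg (xj f ν h ν₁ ε 0 1)
      have a2 := mul_self_nonneg (xj f ν h ν₁ ε 0 2)
      have z0 : xj f ν h ν₁ ε 0 0 = 0 := mul_self_eq_zero.1 (by linarith)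
      have z1 : xj f ν h ν₁ ε 0 1 = 0 := mul_self_eq_zero.1 (by linarith)
      have z2 : xj f ν h ν₁ ε 0 2 = 0 := mul_self_eq_zero.1 (by linarith)
      funext i
      fin_cases i
      · exact z0
      · exact z1
      · exact z2
    simp [det3, e0]
  have hx := smooth_xj H hHK (ε := ε)
  have hC := smooth_Cf H hHK hκ
  have hV1 := smooth_V1c H hHK (ε := ε)
  have hV2 := smooth_V2c H hHK (ε := ε)
  have tr : ∀ b : ℝ × ℝ → ℝ, ContDiff ℝ (⊤ : ℕ∞) b → AEquivAt (Cf f ν h ν₁ ε) 0 (Gb b) 0 →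
      b 0 = 0 ∧ (pu b 0 ≠ 0 ↔ pu (VD f ν h ν₁ ε (rho f ν h ν₁ ε)) 0 ≠ 0) := fun b hb hAE =>
    transport (Cf f ν h ν₁ ε) ν (xj f ν h ν₁ ε) (VD f ν h ν₁ ε (rho f ν h ν₁ ε))
      (V1c f ν h ν₁ ε) (V2c f ν h ν₁ ε)
      (fun p => kap f ν h ν₁ ε p * dot3 (xj f ν h ν₁ ε p) (xj f ν h ν₁ ε p)) b
      hC hx H.smooth_ν hσ hV2 (hk.continuous.mul (hx.dot3' hx).continuous) hb
      (VC_eq H hHK hκ hε) (x_C H hHK hκ) (x_ν H) (Vx_ν H hHK hκ hε) hV20 hV10 hσ0 hσv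
      (mul_ne_zero (hκ 0) hxx) hdet hAE
  constructor
  · intro hAE
    have e : (fun x : ℝ × ℝ => (![x.1, x.2 ^ 2, x.1 * x.2 ^ 3] : R3)) = Gb (fun p => p.1) := by
      funext x
      simp only [Gb, mul_comm]
    rw [e] at hAE
    refine (tr _ contDiff_fst hAE).2.1 ?_
    have : pu (fun p : ℝ × ℝ => p.1) 0 = 1 := by
      simp only [pu]
      rw [(hasFDerivAt_fst (𝕜 := ℝ) (p := (0 : ℝ × ℝ))).fderiv]
      rfl
    rw [this]
    exact one_ne_zero
  · intro hs
    obtain ⟨b, hb, hAE⟩ := normal_form (Cf f ν h ν₁ ε) ν (VD f ν h ν₁ ε (rho f ν h ν₁ ε))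
      (V1c f ν h ν₁ ε) (V2c f ν h ν₁ ε) hC H.smooth_ν hσ hV1 hV2 (VC_eq H hHK hκ hε) hV20 hV10
      hσ0 hσv (xj f ν h ν₁ ε 0) (li_of_det3 hdet)
    have hg : ContDiff ℝ (⊤ : ℕ∞) (fun p : ℝ × ℝ => (p.1, p.2 ^ 2)) :=
      contDiff_fst.prodMk (contDiff_snd.pow 2)
    have hb2 : ContDiff ℝ (⊤ : ℕ∞) (fun p : ℝ × ℝ => b (p.1, p.2 ^ 2)) := hb.comp hg
    obtain ⟨t1, t2⟩ := tr (fun p => b (p.1, p.2 ^ 2)) hb2 hAE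
    have hg0 : ((0 : ℝ × ℝ).1, (0 : ℝ × ℝ).2 ^ 2) = (0 : ℝ × ℝ) := by ext <;> simp
    have hb0 : b 0 = 0 := by rw [hg0] at t1; exact t1
    have hpu : pu (fun p : ℝ × ℝ => b (p.1, p.2 ^ 2)) 0 = pu b 0 := by
      have hline : HasDerivAt (fun u : ℝ => (u, (0 : ℝ))) ((1, 0) : ℝ × ℝ) 0 :=
        (hasDerivAt_id (0:ℝ)).prodMk (hasDerivAt_const 0 0)
      have key : ∀ {g : ℝ × ℝ → ℝ}, ContDiff ℝ (⊤ : ℕ∞) g →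
          HasDerivAt (fun u : ℝ => g (u, 0)) (pu g 0) 0 := fun {g} hg =>
        HasFDerivAt.comp_hasDerivAt (l := g) (f := fun u : ℝ => (u, (0 : ℝ))) (0:ℝ)
          (hg.differentiable (by simp) 0).hasFDerivAt hline
      refine (key hb2).unique ((key hb).congr_of_eventuallyEq (Eventually.of_forall fun u => ?_))
      simp
    rw [hpu] at t2
    exact AEquivAt.trans' hAE (step3 b hb hb0 (t2.2 hs))
end

/-- criterion for the focal surface C_j to have a cuspidal cross cap at
a first order V_j-ridge point, in terms of the invariants of the initial frontal. -/
theorem stmt_16 (f ν h ν₁ : ℝ × ℝ → R3) (H : AdaptedPureFrontal f ν h ν₁)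
    (ε : ℝ) (hε : ε = 1 ∨ ε = -1)
    (hHK : ∀ p : ℝ × ℝ, Hm f ν h ν₁ p ^ 2 - Kg f ν h ν₁ p > 0)
    (hκ : ∀ p : ℝ × ℝ, kap f ν h ν₁ ε p ≠ 0)
    (hkt : kt h ν 0 ≠ 0)
    (hridge : VD f ν h ν₁ ε (kap f ν h ν₁ ε) 0 = 0)
    (hridge1 : VD f ν h ν₁ ε (VD f ν h ν₁ ε (kap f ν h ν₁ ε)) 0 ≠ 0) :
    AEquivAt (Cf f ν h ν₁ ε) 0 (fun x : ℝ × ℝ => ![x.1, x.2 ^ 2, x.1 * x.2 ^ 3]) 0 ↔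
      (deriv (rc f ν h ν₁) 0 ≠ 0 ∧
        pu (rho f ν h ν₁ ε) 0 *
            ((kt h ν 0) ^ 2 * deriv (kν f ν) 0 +
              2 * kt h ν 0 * deriv (kt h ν) 0 * (kap f ν h ν₁ ε 0 - kν f ν 0) +
              (deriv (rb h ν₁) 0 / 3) * (kap f ν h ν₁ ε 0 - kν f ν 0) ^ 2) ≠
          ((kt h ν 0) ^ 2 + (kap f ν h ν₁ ε 0 - kν f ν 0) ^ 2) *
            (kap f ν h ν₁ (-ε) 0 - kap f ν h ν₁ ε 0) *
            (kν f ν 0 - kap f ν h ν₁ ε 0)) := by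
  rw [main_iff H hHK hε hκ hkt hridge hridge1]
  exact ⟨fun hr => ⟨hr, second_cond H hHK hε hκ hkt⟩, fun hr => hr.1⟩
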